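/- Let Ω ⊂ ℝⁿ be a bounded open set with smooth boundary, T > 0, and let F be continuous, uniformly elliptic with constants 0 < λ ≤ Λ, satisfying the structure condition with constant γ, the joint modulus bound |F(M,P,r,x,t) - F(M,P,r,y,s)| ≤ σ₁(|x-y|) + σ₂(|t-s|) with σ₂(h) ≤ C₀h, and sup_{(x,t)}|F(0,0,0,x,t)| ≤ K. Suppose that for every h ∈ (0,1] the Rothe approximations z_{n,h} exist. Then there exists a continuous function u on Ω̄ × [0,T] which is a viscosity solution of u_t + F(D²u, Du, u, x, t) = 0 in Ω × (0,T], vanishes on the parabolic boundary (u = 0 on ∂Ω × [0,T] and u(·,0) = 0 on Ω̄), and is Lipschitz in time: there is a constant C with |u(x,t) - u(x,s)| ≤ C|t-s| for all x ∈ Ω̄ and t, s ∈ [0,T]. -/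

import Mathlib

/-!
The solution is a limit of the Rothe approximations as the step tends to zero, and the work lies in
estimates for them that are uniform in the step.

The tool behind the estimates is a comparison principle for the elliptic problems with the
zeroth-order term `z / h` (`comparison`). It is proved in the classical way: the subsolution `u` and
`-v`, with `v` the supersolution, are regularised by sup-convolution, which makes them
semiconvex; Alexandrov's theorem (`alexandrov`, by differentiating the resolvent of the
subdifferential) together with Jensen's lemma (`jensen`) gives a point near the maximum of the
difference where both have second-order expansions, and these transfer to test functions for `u`
and `v`.

Comparison yields three bounds. Consecutive Rothe steps differ by at most `(K + C₀ T) h`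
(`Hyp.increment_le`, `Hyp.time_lipschitz`), the time dependence of the operator contributing `C₀ h`
per step. With this bound on the discrete time derivative, one barrier `A (1 - exp (μ f))`, where `f`
is the defining function of `Ω`, dominates all approximations up to time `T`
(`Hyp.exists_barrier_bound`). Comparing the approximations with their translates, whose boundary
values are controlled by the barrier, gives equicontinuity in space (`Hyp.equicontinuous`).

Hence along an ultrafilter of steps tending to zero the piecewise constant interpolations converge
pointwise, and by equicontinuity and compactness uniformly, to a function `u` that inherits the
Lipschitz bound in time and the boundary values. If a strict test function touched `u` from above,
a quartic perturbation would make the contact strict, so nearby there would be a space-time grid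
point where the approximation minus the test function is maximal; the viscosity inequality of
that Rothe step then contradicts strictness (`subsol_of_limit`). Supersolutions are reduced to
subsolutions by the symmetry `F ↦ -F(-M, -P, -r, x, t)` (`negOp`).
-/

open scoped RealInnerProductSpace
open MeasureTheory Filter Topology Asymptotics Metric Set

noncomputable section

abbrev Eucl (d : ℕ) := EuclideanSpace ℝ (Fin d)

open Classical in
noncomputable def eigs {d : ℕ} (M : Matrix (Fin d) (Fin d) ℝ) : Fin d → ℝ :=
  if h : M.IsHermitian then h.eigenvalues else 0

noncomputable def specNorm {d : ℕ} (M : Matrix (Fin d) (Fin d) ℝ) : ℝ := ⨆ i, |eigs M i|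
noncomputable def posPartNorm {d : ℕ} (M : Matrix (Fin d) (Fin d) ℝ) : ℝ := ⨆ i, max (eigs M i) 0
noncomputable def negPartNorm {d : ℕ} (M : Matrix (Fin d) (Fin d) ℝ) : ℝ := ⨆ i, max (-(eigs M i)) 0
noncomputable def posPartTrace {d : ℕ} (M : Matrix (Fin d) (Fin d) ℝ) : ℝ := ∑ i, max (eigs M i) 0
noncomputable def negPartTrace {d : ℕ} (M : Matrix (Fin d) (Fin d) ℝ) : ℝ := ∑ i, max (-(eigs M i)) 0

noncomputable def pucciPlus {d : ℕ} (lam Lam : ℝ) (M : Matrix (Fin d) (Fin d) ℝ) : ℝ :=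
  -lam * posPartTrace M + Lam * negPartTrace M

noncomputable def pucciMinus {d : ℕ} (lam Lam : ℝ) (M : Matrix (Fin d) (Fin d) ℝ) : ℝ :=
  -Lam * posPartTrace M + lam * negPartTrace M

noncomputable def gradAt {d : ℕ} (φ : Eucl d → ℝ) (x : Eucl d) : Eucl d :=
  (EuclideanSpace.equiv (Fin d) ℝ).symm (fun i => fderiv ℝ φ x (EuclideanSpace.single i 1))

noncomputable def hessAt {d : ℕ} (φ : Eucl d → ℝ) (x : Eucl d) : Matrix (Fin d) (Fin d) ℝ :=
  Matrix.of fun i j =>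
    fderiv ℝ (fun y => fderiv ℝ φ y (EuclideanSpace.single j 1)) x (EuclideanSpace.single i 1)

noncomputable def quadForm {d : ℕ} (M : Matrix (Fin d) (Fin d) ℝ) (v : Eucl d) : ℝ :=
  ∑ i, ∑ j, M i j * v i * v j

def ViscSubsol {d : ℕ} (Ω : Set (Eucl d))
    (G : Matrix (Fin d) (Fin d) ℝ → Eucl d → ℝ → Eucl d → ℝ)
    (g : Eucl d → ℝ) (u : Eucl d → ℝ) : Prop :=
  ∀ x₀ ∈ Ω, ∀ φ : Eucl d → ℝ, ContDiffAt ℝ 2 φ x₀ →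
    IsLocalMax (fun x => u x - φ x) x₀ →
    G (hessAt φ x₀) (gradAt φ x₀) (u x₀) x₀ ≤ g x₀

def ViscSupersol {d : ℕ} (Ω : Set (Eucl d))
    (G : Matrix (Fin d) (Fin d) ℝ → Eucl d → ℝ → Eucl d → ℝ)
    (g : Eucl d → ℝ) (u : Eucl d → ℝ) : Prop :=
  ∀ x₀ ∈ Ω, ∀ φ : Eucl d → ℝ, ContDiffAt ℝ 2 φ x₀ →
    IsLocalMin (fun x => u x - φ x) x₀ →
    g x₀ ≤ G (hessAt φ x₀) (gradAt φ x₀) (u x₀) x₀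

def ViscSol {d : ℕ} (Ω : Set (Eucl d))
    (G : Matrix (Fin d) (Fin d) ℝ → Eucl d → ℝ → Eucl d → ℝ)
    (g : Eucl d → ℝ) (u : Eucl d → ℝ) : Prop :=
  ViscSubsol Ω G g u ∧ ViscSupersol Ω G g u

def UniformlyElliptic {d : ℕ} (lam Lam : ℝ) (X : Set (Eucl d)) (Tset : Set ℝ)
    (F : Matrix (Fin d) (Fin d) ℝ → Eucl d → ℝ → Eucl d → ℝ → ℝ) : Prop :=
  ∀ M N : Matrix (Fin d) (Fin d) ℝ, M.IsSymm → N.PosSemidef →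
    ∀ (P : Eucl d) (v : ℝ), ∀ x ∈ X, ∀ t ∈ Tset,
      -Lam * specNorm N ≤ F (M + N) P v x t - F M P v x t ∧
      F (M + N) P v x t - F M P v x t ≤ -lam * specNorm N

def IsModulus (σ : ℝ → ℝ) : Prop := Monotone σ ∧ Continuous σ ∧ σ 0 = 0

def StructureCondition {d : ℕ} (lam Lam gam : ℝ) (ω : ℝ → ℝ → ℝ)
    (X : Set (Eucl d)) (Tset : Set ℝ)
    (F : Matrix (Fin d) (Fin d) ℝ → Eucl d → ℝ → Eucl d → ℝ → ℝ) : Prop :=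
  (∀ R > 0, IsModulus (ω R)) ∧
  ∀ R > 0, ∀ M N : Matrix (Fin d) (Fin d) ℝ, M.IsSymm → N.IsSymm →
    ∀ (P Q : Eucl d) (r s : ℝ), |r| ≤ R → |s| ≤ R → ∀ x ∈ X, ∀ t ∈ Tset,
      pucciMinus lam Lam (M - N) - gam * ‖P - Q‖ - ω R (max (s - r) 0)
          ≤ F M P r x t - F N Q s x t ∧
      F M P r x t - F N Q s x t
          ≤ pucciPlus lam Lam (M - N) + gam * ‖P - Q‖ + ω R (max (r - s) 0)

noncomputable def supConv {d : ℕ} (Ω : Set (Eucl d)) (u : Eucl d → ℝ) (ε : ℝ) (x : Eucl d) : ℝ :=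
  sSup ((fun y => u y - ‖x - y‖ ^ 2 / (2 * ε)) '' closure Ω)

noncomputable def infConv {d : ℕ} (Ω : Set (Eucl d)) (u : Eucl d → ℝ) (ε : ℝ) (x : Eucl d) : ℝ :=
  sInf ((fun y => u y + ‖x - y‖ ^ 2 / (2 * ε)) '' closure Ω)

noncomputable def supNorm {d : ℕ} (Ω : Set (Eucl d)) (u : Eucl d → ℝ) : ℝ :=
  sSup ((fun y => |u y|) '' closure Ω)

def RotheStep {d : ℕ} (Ω : Set (Eucl d))
    (F : Matrix (Fin d) (Fin d) ℝ → Eucl d → ℝ → Eucl d → ℝ → ℝ)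
    (h : ℝ) (m : ℕ) (zprev znext : Eucl d → ℝ) : Prop :=
  ContinuousOn znext (closure Ω) ∧
  ViscSol Ω (fun M P r x => F M P r x ((m + 1) * h) + r / h) (fun x => zprev x / h) znext ∧
  ∀ x ∈ frontier Ω, znext x = 0

noncomputable def rotheInterp {d : ℕ} (z : ℕ → Eucl d → ℝ) (h : ℝ) (x : Eucl d) (t : ℝ) : ℝ :=
  ((⌊t / h⌋₊ + 1 : ℝ) * h - t) / h * z ⌊t / h⌋₊ x + (t - (⌊t / h⌋₊ : ℝ) * h) / h * z (⌊t / h⌋₊ + 1) x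

def HasSmoothBoundary {d : ℕ} (Ω : Set (Eucl d)) : Prop :=
  ∃ f : Eucl d → ℝ, ContDiff ℝ (⊤ : ℕ∞) f ∧ Ω = {x | f x < 0} ∧ ∀ x ∈ frontier Ω, fderiv ℝ f x ≠ 0

def C21 {d : ℕ} (φ : Eucl d → ℝ → ℝ) : Prop :=
  (∀ t, ContDiff ℝ 2 fun x => φ x t) ∧
  (∀ x, ContDiff ℝ 1 fun t => φ x t) ∧
  Continuous (fun p : Eucl d × ℝ => φ p.1 p.2) ∧
  Continuous (fun p : Eucl d × ℝ => hessAt (fun x => φ x p.2) p.1) ∧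
  Continuous (fun p : Eucl d × ℝ => gradAt (fun x => φ x p.2) p.1) ∧
  Continuous (fun p : Eucl d × ℝ => deriv (φ p.1) p.2)

def ParabolicViscSubsol {d : ℕ} (Ω : Set (Eucl d)) (T : ℝ)
    (F : Matrix (Fin d) (Fin d) ℝ → Eucl d → ℝ → Eucl d → ℝ → ℝ)
    (u : Eucl d × ℝ → ℝ) : Prop :=
  ∀ φ : Eucl d → ℝ → ℝ, C21 φ → ∀ ε > (0:ℝ),
    (∀ x ∈ closure Ω, ∀ t ∈ Icc (0:ℝ) T,
      ε ≤ deriv (φ x) t +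
        F (hessAt (fun y => φ y t) x) (gradAt (fun y => φ y t) x) (φ x t) x t) →
    ¬ ∃ p ∈ Ω ×ˢ Ioc (0:ℝ) T,
        IsLocalMaxOn (fun q : Eucl d × ℝ => u q - φ q.1 q.2) (Ω ×ˢ Ioc (0:ℝ) T) p ∧
        u p - φ p.1 p.2 = 0

def ParabolicViscSupersol {d : ℕ} (Ω : Set (Eucl d)) (T : ℝ)
    (F : Matrix (Fin d) (Fin d) ℝ → Eucl d → ℝ → Eucl d → ℝ → ℝ)
    (u : Eucl d × ℝ → ℝ) : Prop :=
  ∀ φ : Eucl d → ℝ → ℝ, C21 φ → ∀ ε > (0:ℝ),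
    (∀ x ∈ closure Ω, ∀ t ∈ Icc (0:ℝ) T,
      deriv (φ x) t +
        F (hessAt (fun y => φ y t) x) (gradAt (fun y => φ y t) x) (φ x t) x t ≤ -ε) →
    ¬ ∃ p ∈ Ω ×ˢ Ioc (0:ℝ) T,
        IsLocalMinOn (fun q : Eucl d × ℝ => u q - φ q.1 q.2) (Ω ×ˢ Ioc (0:ℝ) T) p ∧
        u p - φ p.1 p.2 = 0

/-! ### Second-order differentiability of convex functions -/

section Convex

variable {E : Type*} [NormedAddCommGroup E] [InnerProductSpace ℝ E]

/-- `p` is a (global) subgradient of `U` at `x`. -/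
def IsSubgrad (U : E → ℝ) (x p : E) : Prop := ∀ y, U x + ⟪p, y - x⟫ ≤ U y

/-- `U` has a second-order Taylor expansion at `x` with first-order coefficient `p` (a
subgradient) and quadratic part `v ↦ ⟪B v, v⟫ / 2`; the operator `B` need not be symmetric. -/
def HasSecondOrder (U : E → ℝ) (x p : E) (B : E →L[ℝ] E) : Prop :=
  IsSubgrad U x p ∧ ∀ η > 0, ∃ r > 0, ∀ v : E, ‖v‖ < r →
    |U (x + v) - U x - ⟪p, v⟫ - 2⁻¹ * ⟪B v, v⟫| ≤ η * ‖v‖ ^ 2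

lemma IsSubgrad.norm_sub_le {U : E → ℝ} {x y p q : E} (hp : IsSubgrad U x p)
    (hq : IsSubgrad U y q) : ‖x - y‖ ≤ ‖(x + p) - (y + q)‖ := by
  have h1 := hp y
  have h2 := hq x
  have h3 : ⟪x - y, (x + p) - (y + q)⟫ ≥ ‖x - y‖ ^ 2 := by
    have e : (x + p) - (y + q) = (x - y) + (p - q) := by abel
    have e2 : y - x = -(x - y) := by abel
    rw [e2, inner_neg_right] at h1
    rw [e, inner_add_right, real_inner_self_eq_norm_sq, real_inner_comm, inner_sub_left]
    linarith
  have h4 := real_inner_le_norm (x - y) ((x + p) - (y + q))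
  by_contra! h
  have h5 : 0 ≤ ‖(x + p) - (y + q)‖ := norm_nonneg _
  nlinarith

/-- The resolvent `(I + ∂U)⁻¹` is nonexpansive where it is defined, hence has a globally defined
Lipschitz extension. -/
lemma exists_resolvent [FiniteDimensional ℝ E] (U : E → ℝ) :
    ∃ (J : E → E) (C : NNReal), LipschitzWith C J ∧ ∀ x p, IsSubgrad U x p → J (x + p) = x := by
  classical
  let R : Set E := {y | ∃ x p, IsSubgrad U x p ∧ y = x + p}
  let j : E → E := fun y => if h : y ∈ R then h.choose else 0
  have hj : ∀ x p, IsSubgrad U x p → j (x + p) = x := by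
    intro x p h
    have hR : x + p ∈ R := ⟨x, p, h, rfl⟩
    obtain ⟨q, hq, e⟩ := hR.choose_spec
    have h1 : j (x + p) = hR.choose := by simp only [j, dif_pos hR]
    have h2 := hq.norm_sub_le h
    rw [← e, sub_self, norm_zero] at h2
    rw [h1]
    exact sub_eq_zero.mp (norm_le_zero_iff.mp h2)
  have hl : LipschitzOnWith 1 j R := by
    apply LipschitzOnWith.of_dist_le_mul
    rintro _ ⟨x, p, h, rfl⟩ _ ⟨y, q, h', rfl⟩
    rw [hj x p h, hj y q h', dist_eq_norm, dist_eq_norm]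
    simpa using h.norm_sub_le h'
  obtain ⟨J, hJ, hJe⟩ := hl.extend_finite_dimension
  exact ⟨J, _, hJ, fun x p h => by rw [← hJe ⟨x, p, h, rfl⟩, hj x p h]⟩

lemma telescoping_bound (g : ℝ → ℝ) (C C' : ℝ)
    (h : ∀ a b, 0 ≤ a → a ≤ b → b ≤ 1 → |g b - g a| ≤ C * (b - a) + C' * (b - a) ^ 2) :
    |g 1 - g 0| ≤ C := by
  have key : ∀ n : ℕ, |g 1 - g 0| ≤ C + C' * (1 / ((n : ℝ) + 1)) := by
    intro n
    have hn : (0 : ℝ) < (n : ℝ) + 1 := by positivity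
    have e : g 1 - g 0 = ∑ i ∈ Finset.range (n + 1),
        (g (((i + 1 : ℕ) : ℝ) / (n + 1)) - g ((i : ℝ) / (n + 1))) := by
      rw [Finset.sum_range_sub (fun i : ℕ => g ((i : ℝ) / (n + 1)))]
      simp [hn.ne']
    rw [e]
    refine (Finset.abs_sum_le_sum_abs _ _).trans ?_
    have : ∀ i ∈ Finset.range (n + 1),
        |g (((i + 1 : ℕ) : ℝ) / (n + 1)) - g ((i : ℝ) / (n + 1))|
          ≤ C * (1 / ((n : ℝ) + 1)) + C' * (1 / ((n : ℝ) + 1)) ^ 2 := by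
      intro i hi
      have hi' : (i : ℝ) + 1 ≤ n + 1 := by
        have := Finset.mem_range.mp hi
        exact_mod_cast this
      have := h ((i : ℝ) / (n + 1)) (((i + 1 : ℕ) : ℝ) / (n + 1)) (by positivity)
        (by push_cast; gcongr; linarith) (by push_cast; rw [div_le_one hn]; exact hi')
      have e2 : ((i + 1 : ℕ) : ℝ) / (n + 1) - (i : ℝ) / (n + 1) = 1 / ((n : ℝ) + 1) := by
        push_cast; ring
      rwa [e2] at this
    refine (Finset.sum_le_sum this).trans (le_of_eq ?_)
    simp only [Finset.sum_const, Finset.card_range, nsmul_eq_mul]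
    push_cast
    field_simp
  have ht : Tendsto (fun n : ℕ => C + C' * (1 / ((n : ℝ) + 1))) atTop (𝓝 (C + C' * 0)) :=
    (tendsto_one_div_add_atTop_nhds_zero_nat.const_mul C').const_add C
  simpa using ge_of_tendsto' ht key

/-- A first-order expansion of the subdifferential integrates to a second-order expansion of the
function. -/
lemma second_order_of_subgrad {U : E → ℝ} (hex : ∀ x, ∃ p, IsSubgrad U x p) {x p : E}
    {B : E →L[ℝ] E} {η r : ℝ}
    (h : ∀ x', ‖x' - x‖ < r → ∀ p', IsSubgrad U x' p' →
      ‖p' - p - B (x' - x)‖ ≤ η * ‖x' - x‖) (hη : 0 ≤ η) {v : E} (hv : ‖v‖ < r) :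
    |U (x + v) - U x - ⟪p, v⟫ - 2⁻¹ * ⟪B v, v⟫| ≤ η * ‖v‖ ^ 2 := by
  have hs : ∀ s, 0 ≤ s → s ≤ 1 → ∀ q, IsSubgrad U (x + s • v) q →
      |⟪q, v⟫ - ⟪p, v⟫ - s * ⟪B v, v⟫| ≤ η * ‖v‖ ^ 2 := by
    intro s h0 h1 q hq
    have hn : ‖s • v‖ ≤ ‖v‖ := by
      rw [norm_smul, Real.norm_of_nonneg h0]
      nlinarith [norm_nonneg v]
    have h2 := h (x + s • v) (by simpa using hn.trans_lt hv) q hq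
    rw [add_sub_cancel_left] at h2
    have h3 := abs_real_inner_le_norm (q - p - B (s • v)) v
    rw [inner_sub_left, inner_sub_left, map_smul, real_inner_smul_left] at h3
    refine h3.trans ?_
    rw [map_smul] at h2
    calc _ ≤ (η * ‖s • v‖) * ‖v‖ := by gcongr
      _ ≤ (η * ‖v‖) * ‖v‖ := by gcongr
      _ = _ := by ring
  have := telescoping_bound (fun s => U (x + s • v) - s * ⟪p, v⟫ - 2⁻¹ * s ^ 2 * ⟪B v, v⟫)
    (η * ‖v‖ ^ 2) (2⁻¹ * |⟪B v, v⟫|) ?_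
  · simp only [one_smul, one_mul, one_pow, mul_one, zero_smul, add_zero, zero_mul, mul_zero,
      sub_zero, ne_eq, OfNat.ofNat_ne_zero, not_false_eq_true, zero_pow] at this
    convert this using 2
    ring
  · intro a b ha hab hb
    obtain ⟨pa, hpa⟩ := hex (x + a • v)
    obtain ⟨pb, hpb⟩ := hex (x + b • v)
    have h1 := hpa (x + b • v)
    have h2 := hpb (x + a • v)
    have e1 : x + b • v - (x + a • v) = (b - a) • v := by rw [sub_smul]; abel
    have e2 : x + a • v - (x + b • v) = (a - b) • v := by rw [sub_smul]; abel
    rw [e1, real_inner_smul_right] at h1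
    rw [e2, real_inner_smul_right] at h2
    have h3 := abs_le.mp (hs a ha (hab.trans hb) pa hpa)
    have h4 := abs_le.mp (hs b (ha.trans hab) hb pb hpb)
    have h5 := neg_abs_le ⟪B v, v⟫
    have h6 := le_abs_self ⟪B v, v⟫
    have hba : 0 ≤ b - a := by linarith
    have h3' := mul_le_mul_of_nonneg_left h3.1 hba
    have h4' := mul_le_mul_of_nonneg_left h4.2 hba
    have h5' := mul_le_mul_of_nonneg_left h5 (sq_nonneg (b - a))
    have h6' := mul_le_mul_of_nonneg_left h6 (sq_nonneg (b - a))
    rw [abs_le]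
    constructor <;> nlinarith

/-- The slopes of the planes touching `W - c |·|²` from above, with `W` convex, depend in a
Lipschitz way on the contact point. -/
lemma contact_slope_lipschitz {W : E → ℝ} (hex : ∀ x, ∃ p, IsSubgrad W x p) {c : ℝ} (hc : 0 ≤ c)
    {x x' p p' : E}
    (h : ∀ y, W y - c * ‖y‖ ^ 2 ≤ W x - c * ‖x‖ ^ 2 + ⟪p, y - x⟫)
    (h' : ∀ y, W y - c * ‖y‖ ^ 2 ≤ W x' - c * ‖x'‖ ^ 2 + ⟪p', y - x'⟫) :
    ‖p' - p‖ ≤ 6 * c * ‖x' - x‖ := by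
  -- At a contact point the only subgradient of `W` is `p + 2 c x`.
  have hq : ∀ x p, (∀ y, W y - c * ‖y‖ ^ 2 ≤ W x - c * ‖x‖ ^ 2 + ⟪p, y - x⟫) →
      (∀ y, W y ≤ W x + ⟪p + (2 * c) • x, y - x⟫ + c * ‖y - x‖ ^ 2) ∧
        IsSubgrad W x (p + (2 * c) • x) := by
    intro x p h
    have h1 : ∀ y, W y ≤ W x + ⟪p + (2 * c) • x, y - x⟫ + c * ‖y - x‖ ^ 2 := by
      intro y
      have := h y
      have e : ‖y‖ ^ 2 = ‖x‖ ^ 2 + 2 * ⟪x, y - x⟫ + ‖y - x‖ ^ 2 := by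
        rw [← norm_add_sq_real]; simp
      rw [inner_add_left, real_inner_smul_left]
      rw [e] at this
      linarith
    refine ⟨h1, ?_⟩
    obtain ⟨q, hq⟩ := hex x
    suffices q = p + (2 * c) • x by rwa [← this]
    set a := q - (p + (2 * c) • x) with ha
    have h2 : ∀ s : ℝ, 0 < s → ‖a‖ ^ 2 ≤ s * (c * ‖a‖ ^ 2) := by
      intro s hs
      have h3 := h1 (x + s • a)
      have h4 := hq (x + s • a)
      rw [add_sub_cancel_left] at h3 h4
      rw [norm_smul, Real.norm_of_nonneg hs.le] at h3
      have h5 : ⟪q, s • a⟫ - ⟪p + (2 * c) • x, s • a⟫ = s * ‖a‖ ^ 2 := by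
        rw [← inner_sub_left, ← ha, real_inner_smul_right, real_inner_self_eq_norm_sq]
      have h6 : s * ‖a‖ ^ 2 ≤ s * (s * (c * ‖a‖ ^ 2)) := by nlinarith
      exact le_of_mul_le_mul_left h6 hs
    have h3 : ‖a‖ ^ 2 ≤ 0 := by
      have := h2 (1 / (2 * (c + 1))) (by positivity)
      have h4 : 1 / (2 * (c + 1)) * (c * ‖a‖ ^ 2) ≤ 1 / 2 * ‖a‖ ^ 2 := by
        rw [← mul_assoc]
        gcongr
        rw [div_mul_eq_mul_div, div_le_div_iff₀ (by positivity) (by positivity)]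
        linarith
      linarith
    have h4 : a = 0 := by
      rw [← norm_eq_zero]
      nlinarith [norm_nonneg a]
    exact sub_eq_zero.mp h4
  obtain ⟨h1, h2⟩ := hq x p h
  obtain ⟨-, h2'⟩ := hq x' p' h'
  set q := p + (2 * c) • x with hqd
  set q' := p' + (2 * c) • x' with hqd'
  have key : ∀ y, ⟪q' - q, y - x'⟫ ≤ c * ‖y - x‖ ^ 2 := by
    intro y
    have a1 := h1 y
    have a2 := h2 x'
    have a3 := h2' y
    have e : y - x = (y - x') + (x' - x) := by abel
    rw [inner_sub_left]
    have : ⟪q, y - x⟫ = ⟪q, y - x'⟫ + ⟪q, x' - x⟫ := by rw [← inner_add_right, ← e]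
    linarith
  have hq4 : ‖q' - q‖ ≤ 4 * c * ‖x' - x‖ := by
    rcases eq_or_ne (q' - q) 0 with h0 | h0
    · rw [h0, norm_zero]; positivity
    rcases eq_or_ne (x' - x) 0 with hx | hx
    · -- Distinct slopes at one point are impossible: take `y = x' + s (q' - q)`.
      exfalso
      have hxx : x' = x := sub_eq_zero.mp hx
      have hn : 0 < ‖q' - q‖ := norm_pos_iff.mpr h0
      have := key (x' + (1 / (c + 1)) • (q' - q))
      rw [add_sub_cancel_left, real_inner_smul_right, real_inner_self_eq_norm_sq, hxx,
        add_sub_cancel_left, norm_smul, Real.norm_of_nonneg (by positivity : 0 ≤ 1 / (c + 1)),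
        mul_pow] at this
      have h5 : c * ((1 / (c + 1)) ^ 2 * ‖q' - q‖ ^ 2) < 1 / (c + 1) * ‖q' - q‖ ^ 2 := by
        rw [← mul_assoc]
        gcongr
        rw [div_pow, one_pow, mul_one_div, div_lt_div_iff₀ (by positivity) (by positivity)]
        nlinarith
      linarith
    · set ρ := ‖x' - x‖ with hρ
      have hρ0 : 0 < ρ := norm_pos_iff.mpr hx
      have hn : 0 < ‖q' - q‖ := norm_pos_iff.mpr h0
      have h3 := key (x' + (ρ / ‖q' - q‖) • (q' - q))
      rw [add_sub_cancel_left, real_inner_smul_right, real_inner_self_eq_norm_sq] at h3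
      have h4 : ‖x' + (ρ / ‖q' - q‖) • (q' - q) - x‖ ≤ 2 * ρ := by
        have e : x' + (ρ / ‖q' - q‖) • (q' - q) - x
          = (x' - x) + (ρ / ‖q' - q‖) • (q' - q) := by abel
        rw [e]
        refine (norm_add_le _ _).trans ?_
        rw [norm_smul, Real.norm_of_nonneg (by positivity), div_mul_cancel₀ _ hn.ne', ← hρ]
        linarith
      have h5 : ρ / ‖q' - q‖ * ‖q' - q‖ ^ 2 = ρ * ‖q' - q‖ := by field_simp
      rw [h5] at h3
      have h6 : ρ * ‖q' - q‖ ≤ ρ * (4 * c * ρ) := by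
        calc _ ≤ c * ‖x' + (ρ / ‖q' - q‖) • (q' - q) - x‖ ^ 2 := h3
          _ ≤ c * (2 * ρ) ^ 2 := by gcongr
          _ = _ := by ring
      exact le_of_mul_le_mul_left h6 hρ0
  have e : p' - p = (q' - q) - (2 * c) • (x' - x) := by
    rw [hqd, hqd', smul_sub]; abel
  rw [e]
  refine (norm_sub_le _ _).trans ?_
  rw [norm_smul, Real.norm_of_nonneg (by positivity)]
  linarith

variable [FiniteDimensional ℝ E]

/-- Where the (extended) resolvent is differentiable with invertible derivative `D`, the
subdifferential has a first-order expansion with derivative `D⁻¹ - I`. -/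
lemma subgrad_expansion {U : E → ℝ} (hU : Continuous U) {L : ℝ}
    (hL : ∀ x p, IsSubgrad U x p → ‖p‖ ≤ L)
    {J : E → E} (hJ : ∀ x p, IsSubgrad U x p → J (x + p) = x) {x p : E} (hp : IsSubgrad U x p)
    {D : E →L[ℝ] E} (hD : HasFDerivAt J D (x + p)) (hdet : D.det ≠ 0) :
    ∃ B : E →L[ℝ] E, ∀ η > 0, ∃ r > 0, ∀ x', ‖x' - x‖ < r → ∀ p', IsSubgrad U x' p' →
      ‖p' - p - B (x' - x)‖ ≤ η * ‖x' - x‖ := by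
  let D' := D.toContinuousLinearEquivOfDetNeZero hdet
  have hD' : ∀ v, D'.symm (D v) = v := by
    intro v
    have : D v = D' v := by simp [D']
    rw [this, ContinuousLinearEquiv.symm_apply_apply]
  have hexp : ∀ c > 0, ∃ ρ > 0, ∀ y', ‖y' - (x + p)‖ < ρ →
      ‖J y' - x - D (y' - (x + p))‖ ≤ c * ‖y' - (x + p)‖ := by
    intro c hc
    have := (hasFDerivAt_iff_isLittleO.mp hD).def hc
    rw [Metric.eventually_nhds_iff] at this
    obtain ⟨ρ, hρ, h⟩ := this
    refine ⟨ρ, hρ, fun y' hy' => ?_⟩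
    have := h (y := y') (by rwa [dist_eq_norm])
    rwa [hJ x p hp] at this
  -- A second subgradient would make `J` constant along a segment, against invertibility of `D`.
  have huniq : ∀ p2, IsSubgrad U x p2 → p2 = p := by
    intro p2 hp2
    have hz : D (p2 - p) = 0 := by
      rw [← norm_le_zero_iff]
      refine le_of_forall_pos_le_add fun ε hε => ?_
      obtain ⟨ρ, hρ, h⟩ := hexp (ε / (‖p2 - p‖ + 1)) (by positivity)
      obtain ⟨s, hs0, hs1, hsρ⟩ : ∃ s : ℝ, 0 < s ∧ s ≤ 1 ∧ s * ‖p2 - p‖ < ρ := by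
        refine ⟨min 1 (ρ / (‖p2 - p‖ + 1)), by positivity, min_le_left _ _, ?_⟩
        calc _ ≤ ρ / (‖p2 - p‖ + 1) * ‖p2 - p‖ := by gcongr; exact min_le_right _ _
          _ < ρ / (‖p2 - p‖ + 1) * (‖p2 - p‖ + 1) := by gcongr; linarith
          _ = ρ := by field_simp
      have hseg : IsSubgrad U x (p + s • (p2 - p)) := by
        intro y
        have h1 := hp y
        have h2 := hp2 y
        rw [inner_add_left, real_inner_smul_left, inner_sub_left]
        nlinarith
      have h3 := h (x + (p + s • (p2 - p)))
        (by
          have : x + (p + s • (p2 - p)) - (x + p) = s • (p2 - p) := by abel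
          rw [this, norm_smul, Real.norm_of_nonneg hs0.le]; exact hsρ)
      have e : x + (p + s • (p2 - p)) - (x + p) = s • (p2 - p) := by abel
      rw [hJ _ _ hseg, e, sub_self, zero_sub, norm_neg, map_smul, norm_smul, norm_smul,
        Real.norm_of_nonneg hs0.le] at h3
      have h4 : ‖D (p2 - p)‖ ≤ ε / (‖p2 - p‖ + 1) * ‖p2 - p‖ := by
        have : s * ‖D (p2 - p)‖ ≤ s * (ε / (‖p2 - p‖ + 1) * ‖p2 - p‖) := by linarith
        exact le_of_mul_le_mul_left this hs0
      have h5 : ε / (‖p2 - p‖ + 1) * ‖p2 - p‖ ≤ ε := by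
        rw [div_mul_eq_mul_div, div_le_iff₀ (by positivity)]
        nlinarith [norm_nonneg (p2 - p)]
      linarith
    have := hD' (p2 - p)
    rw [hz, map_zero] at this
    exact sub_eq_zero.mp this.symm
  have hcont : ∀ ρ > 0, ∃ r > 0, ∀ x', ‖x' - x‖ < r → ∀ p', IsSubgrad U x' p' → ‖p' - p‖ < ρ := by
    intro ρ hρ
    by_contra! hcon
    have hpos : ∀ n : ℕ, (0 : ℝ) < 1 / ((n : ℝ) + 1) := fun n => by positivity
    choose xs hxs ps hps hfar using fun n : ℕ => hcon _ (hpos n)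
    obtain ⟨p2, -, φ, hφ, hlim⟩ := (isCompact_closedBall (0 : E) L).tendsto_subseq
      (x := ps) (fun n => by simpa using hL _ _ (hps n))
    have hxlim : Tendsto xs atTop (𝓝 x) := by
      rw [tendsto_iff_norm_sub_tendsto_zero]
      exact squeeze_zero (fun _ => norm_nonneg _) (fun n => (hxs n).le)
        tendsto_one_div_add_atTop_nhds_zero_nat
    have hxl := hxlim.comp hφ.tendsto_atTop
    have hp2 : IsSubgrad U x p2 := by
      intro y
      have ht : Tendsto (fun n => U (xs (φ n)) + ⟪ps (φ n), y - xs (φ n)⟫) atTop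
          (𝓝 (U x + ⟪p2, y - x⟫)) :=
        ((hU.tendsto x).comp hxl).add (hlim.inner (tendsto_const_nhds.sub hxl))
      exact le_of_tendsto' ht fun n => hps (φ n) y
    have h1 : Tendsto (fun n => ‖ps (φ n) - p‖) atTop (𝓝 ‖p2 - p‖) :=
      (hlim.sub_const p).norm
    have h2 := ge_of_tendsto' h1 fun n => hfar (φ n)
    rw [huniq p2 hp2, sub_self, norm_zero] at h2
    linarith
  refine ⟨(D'.symm : E →L[ℝ] E) - ContinuousLinearMap.id ℝ E, fun η hη => ?_⟩
  set κ := ‖(D'.symm : E →L[ℝ] E)‖ + 1 with hκ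
  have hκ0 : 0 < κ := by positivity
  have hκle : ∀ v, ‖D'.symm v‖ ≤ κ * ‖v‖ := by
    intro v
    have := (D'.symm : E →L[ℝ] E).le_opNorm v
    have h2 := norm_nonneg v
    simp only [ContinuousLinearEquiv.coe_coe] at this
    nlinarith
  -- `c` makes `κ c ≤ 1/2` and `2 κ² c ≤ η`.
  obtain ⟨c, hc, hc1, hc2⟩ : ∃ c > 0, κ * c ≤ 1 / 2 ∧ 2 * κ ^ 2 * c ≤ η := by
    refine ⟨min (1 / (2 * κ)) (η / (2 * κ ^ 2)), by positivity, ?_, ?_⟩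
    · calc _ ≤ κ * (1 / (2 * κ)) := by gcongr; exact min_le_left _ _
        _ = _ := by field_simp
    · calc _ ≤ 2 * κ ^ 2 * (η / (2 * κ ^ 2)) := by gcongr; exact min_le_right _ _
        _ = _ := by field_simp
  obtain ⟨ρ, hρ, h⟩ := hexp c hc
  obtain ⟨r, hr, h'⟩ := hcont (ρ / 2) (by positivity)
  refine ⟨min r (ρ / 2), by positivity, fun x' hx' p' hp' => ?_⟩
  have h1 := h' x' (hx'.trans_le (min_le_left _ _)) p' hp'
  have h2 := hx'.trans_le (min_le_right r (ρ / 2))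
  have e : x' + p' - (x + p) = (x' - x) + (p' - p) := by abel
  have h3 := h (x' + p') (by
    rw [e]; linarith [norm_add_le (x' - x) (p' - p)])
  rw [hJ x' p' hp'] at h3
  set y := x' + p' - (x + p) with hy
  have h4 : ‖D'.symm (x' - x) - y‖ ≤ κ * (c * ‖y‖) := by
    have := hκle (x' - x - D y)
    rw [map_sub, hD'] at this
    exact this.trans (by gcongr)
  have h5 : ‖y‖ ≤ 2 * κ * ‖x' - x‖ := by
    have h6 := norm_sub_norm_le y (D'.symm (x' - x))
    rw [norm_sub_rev y] at h6
    have h7 := hκle (x' - x)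
    have h8 : κ * (c * ‖y‖) ≤ 1 / 2 * ‖y‖ := by
      rw [← mul_assoc]; gcongr
    linarith
  have e3 : p' - p - ((D'.symm : E →L[ℝ] E) - ContinuousLinearMap.id ℝ E) (x' - x)
      = -(D'.symm (x' - x) - y) := by
    simp only [sub_apply, ContinuousLinearEquiv.coe_coe,
      ContinuousLinearMap.id_apply, hy]
    abel
  rw [e3, norm_neg]
  calc _ ≤ κ * (c * ‖y‖) := h4
    _ ≤ κ * (c * (2 * κ * ‖x' - x‖)) := by gcongr
    _ = (2 * κ ^ 2 * c) * ‖x' - x‖ := by ring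
    _ ≤ η * ‖x' - x‖ := by gcongr

variable [MeasurableSpace E] [BorelSpace E]

/-- Alexandrov's theorem: a finite convex function with bounded subgradients has a second-order
expansion almost everywhere. -/
lemma alexandrov {U : E → ℝ} (hU : Continuous U) (hex : ∀ x, ∃ p, IsSubgrad U x p) {L : ℝ}
    (hL : ∀ x p, IsSubgrad U x p → ‖p‖ ≤ L) :
    Measure.hausdorffMeasure (Module.finrank ℝ E : ℝ)
      {x : E | ¬ ∃ p B, HasSecondOrder U x p B} = 0 := by
  obtain ⟨J, C, hJl, hJ⟩ := exists_resolvent U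
  set μ : Measure E := Measure.hausdorffMeasure (Module.finrank ℝ E : ℝ) with hμ
  have : μ.IsAddHaarMeasure := isAddHaarMeasure_hausdorffMeasure
  set N1 : Set E := {y | ¬ DifferentiableAt ℝ J y}
  set N2 : Set E := {y | DifferentiableAt ℝ J y ∧ (fderiv ℝ J y).det = 0}
  have h1 : μ (J '' N1) = 0 := by
    have h0 : μ N1 = 0 := hJl.ae_differentiableAt (μ := μ)
    have := hJl.hausdorffMeasure_image_le (d := (Module.finrank ℝ E : ℝ)) (by positivity) N1
    rw [← hμ, h0, mul_zero] at this
    exact le_antisymm this (zero_le)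
  have h2 : μ (J '' N2) = 0 :=
    addHaar_image_eq_zero_of_det_fderivWithin_eq_zero μ
      (fun y hy => hy.1.hasFDerivAt.hasFDerivWithinAt) (fun y hy => hy.2)
  refine measure_mono_null ?_ (measure_union_null h1 h2)
  intro x hx
  obtain ⟨p, hp⟩ := hex x
  by_contra hcon
  apply hx
  have hd : DifferentiableAt ℝ J (x + p) := by
    by_contra h
    exact hcon (Or.inl ⟨x + p, h, hJ x p hp⟩)
  have hdet : (fderiv ℝ J (x + p)).det ≠ 0 := by
    intro h
    exact hcon (Or.inr ⟨x + p, ⟨hd, h⟩, hJ x p hp⟩)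
  obtain ⟨B, hB⟩ := subgrad_expansion hU hL hJ hp hd.hasFDerivAt hdet
  refine ⟨p, B, hp, fun η hη => ?_⟩
  obtain ⟨r, hr, h⟩ := hB η hη
  exact ⟨r, hr, fun v hv => second_order_of_subgrad hex h hη.le hv⟩

/-- Jensen's lemma: if `W - c |·|²`, with `W` convex, attains a maximum after subtraction of any
small linear form, then the contact points with small slopes are not contained in a null set. -/
lemma jensen {W : E → ℝ} (hex : ∀ x, ∃ p, IsSubgrad W x p) {c δ : ℝ} (hc : 0 ≤ c) (hδ : 0 < δ)
    (hmax : ∀ p : E, ‖p‖ ≤ δ → ∃ x, ∀ y, W y - c * ‖y‖ ^ 2 ≤ W x - c * ‖x‖ ^ 2 + ⟪p, y - x⟫)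
    {N : Set E} (hN : Measure.hausdorffMeasure (Module.finrank ℝ E : ℝ) N = 0) :
    ∃ x p : E, x ∉ N ∧ ‖p‖ ≤ δ ∧
      ∀ y, W y - c * ‖y‖ ^ 2 ≤ W x - c * ‖x‖ ^ 2 + ⟪p, y - x⟫ := by
  classical
  by_contra! hcon
  set μ : Measure E := Measure.hausdorffMeasure (Module.finrank ℝ E : ℝ) with hμ
  have : μ.IsAddHaarMeasure := isAddHaarMeasure_hausdorffMeasure
  let A : Set E := {x | ∃ p, ‖p‖ ≤ δ ∧
    ∀ y, W y - c * ‖y‖ ^ 2 ≤ W x - c * ‖x‖ ^ 2 + ⟪p, y - x⟫}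
  have hAN : A ⊆ N := by
    rintro x ⟨p, hp, h⟩
    by_contra hx
    obtain ⟨y, hy⟩ := hcon x p hx hp
    exact absurd (h y) (not_le.mpr hy)
  let Φ : E → E := fun x => if h : x ∈ A then h.choose else 0
  have hΦ : ∀ x ∈ A, ∀ y, W y - c * ‖y‖ ^ 2 ≤ W x - c * ‖x‖ ^ 2 + ⟪Φ x, y - x⟫ := by
    intro x hx
    simp only [Φ, dif_pos hx]
    exact hx.choose_spec.2
  have hl : LipschitzOnWith ⟨6 * c, by positivity⟩ Φ A := by
    apply LipschitzOnWith.of_dist_le_mul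
    intro x hx y hy
    rw [dist_eq_norm, dist_eq_norm]
    exact contact_slope_lipschitz hex hc (hΦ y hy) (hΦ x hx)
  have hsub : closedBall (0 : E) δ ⊆ Φ '' A := by
    intro p hp
    obtain ⟨x, hx⟩ := hmax p (by simpa using hp)
    have hxA : x ∈ A := ⟨p, by simpa using hp, hx⟩
    refine ⟨x, hxA, ?_⟩
    have := contact_slope_lipschitz hex hc hx (hΦ x hxA)
    rw [sub_self, norm_zero, mul_zero] at this
    exact sub_eq_zero.mp (norm_le_zero_iff.mp this)
  have h0 : μ (Φ '' A) = 0 := by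
    have h1 := hl.hausdorffMeasure_image_le (d := (Module.finrank ℝ E : ℝ)) (by positivity)
    rw [← hμ, measure_mono_null hAN hN, mul_zero] at h1
    exact le_antisymm h1 (zero_le)
  have h1 : 0 < μ (closedBall (0 : E) δ) := measure_closedBall_pos μ 0 hδ
  exact absurd (measure_mono_null hsub h0) h1.ne'

end Convex

/-! ### Sup-convolutions -/

section Convolution

variable {E : Type*} [NormedAddCommGroup E] [InnerProductSpace ℝ E]

/-- Two convex functions `U`, `V` such that `U + V - c |·|²` has maxima stable under small linear
perturbations have second-order expansions at a common contact point of small slope `p`; there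
the gradients add up to `p + 2 c x` and the Hessians to at most `2 c`. -/
lemma exists_contact_second_order [FiniteDimensional ℝ E] [MeasurableSpace E] [BorelSpace E]
    {U V : E → ℝ} (hU : Continuous U) (hV : Continuous V)
    (hexU : ∀ x, ∃ p, IsSubgrad U x p) (hexV : ∀ x, ∃ p, IsSubgrad V x p) {L : ℝ}
    (hLU : ∀ x p, IsSubgrad U x p → ‖p‖ ≤ L) (hLV : ∀ x p, IsSubgrad V x p → ‖p‖ ≤ L)
    {c δ : ℝ} (hc : 0 ≤ c) (hδ : 0 < δ)
    (hmax : ∀ p : E, ‖p‖ ≤ δ →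
      ∃ x, ∀ y, U y + V y - c * ‖y‖ ^ 2 ≤ U x + V x - c * ‖x‖ ^ 2 + ⟪p, y - x⟫) :
    ∃ (x a b : E) (A B : E →L[ℝ] E), HasSecondOrder U x a A ∧ HasSecondOrder V x b B ∧
      ‖a + b - (2 * c) • x‖ ≤ δ ∧ (∀ v, ⟪A v, v⟫ + ⟪B v, v⟫ ≤ 2 * c * ‖v‖ ^ 2) ∧
      ∀ y, U y + V y - c * ‖y‖ ^ 2 ≤ U x + V x - c * ‖x‖ ^ 2 + δ * ‖y - x‖ := by
  obtain ⟨x, p, hxN, hp, hx⟩ := jensen (W := fun y => U y + V y) (fun x => by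
      obtain ⟨p, hp⟩ := hexU x
      obtain ⟨q, hq⟩ := hexV x
      refine ⟨p + q, fun y => ?_⟩
      have h1 := hp y
      have h2 := hq y
      rw [inner_add_left]
      linarith) hc hδ hmax
    (measure_union_null (alexandrov hU hexU hLU) (alexandrov hV hexV hLV))
  simp only [mem_union, mem_ofPred_eq, not_or, not_not] at hxN
  obtain ⟨⟨a, A, hA⟩, ⟨b, B, hB⟩⟩ := hxN
  have hsq : ∀ v, ‖x + v‖ ^ 2 = ‖x‖ ^ 2 + 2 * ⟪x, v⟫ + ‖v‖ ^ 2 := fun v => norm_add_sq_real x v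
  -- First-order condition.
  have hz : a + b - (2 * c) • x - p = 0 := by
    set m := a + b - (2 * c) • x - p with hm
    have h1 : ∀ s : ℝ, 0 < s → ‖m‖ ^ 2 ≤ s * (c * ‖m‖ ^ 2) := by
      intro s hs
      have h1 := hA.1 (x + s • m)
      have h2 := hB.1 (x + s • m)
      have h3 := hx (x + s • m)
      rw [add_sub_cancel_left] at h1 h2 h3
      rw [hsq] at h3
      have e : s * ‖m‖ ^ 2 = ⟪a, s • m⟫ + ⟪b, s • m⟫ - 2 * c * ⟪x, s • m⟫ - ⟪p, s • m⟫ := by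
        rw [← real_inner_smul_left, ← inner_add_left, ← inner_sub_left, ← inner_sub_left, ← hm,
          real_inner_smul_right, real_inner_self_eq_norm_sq]
      have e2 : ‖s • m‖ ^ 2 = s * (s * ‖m‖ ^ 2) := by
        rw [norm_smul, Real.norm_of_nonneg hs.le]; ring
      rw [e2] at h3
      have : s * ‖m‖ ^ 2 ≤ s * (s * (c * ‖m‖ ^ 2)) := by linarith
      exact le_of_mul_le_mul_left this hs
    have h2 := h1 (1 / (2 * (c + 1))) (by positivity)
    have h4 : 1 / (2 * (c + 1)) * (c * ‖m‖ ^ 2) ≤ 1 / 2 * ‖m‖ ^ 2 := by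
      rw [← mul_assoc]
      gcongr
      rw [div_mul_eq_mul_div, div_le_div_iff₀ (by positivity) (by positivity)]
      linarith
    rw [← norm_eq_zero]
    nlinarith [norm_nonneg m]
  have hpe : a + b - (2 * c) • x = p := sub_eq_zero.mp hz
  refine ⟨x, a, b, A, B, hA, hB, by rwa [hpe], fun v => ?_, fun y => ?_⟩
  · -- Second-order condition, tested on `s v` with `s` small.
    refine le_of_forall_pos_le_add fun ε hε => ?_
    set η := ε / (4 * (‖v‖ ^ 2 + 1)) with hη
    have hη0 : 0 < η := by positivity
    obtain ⟨r1, hr1, h1⟩ := hA.2 η hη0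
    obtain ⟨r2, hr2, h2⟩ := hB.2 η hη0
    obtain ⟨s, hs0, hs⟩ : ∃ s : ℝ, 0 < s ∧ s * ‖v‖ < min r1 r2 := by
      refine ⟨min r1 r2 / (‖v‖ + 1), by positivity, ?_⟩
      rw [div_mul_eq_mul_div, div_lt_iff₀ (by positivity)]
      have : 0 < min r1 r2 := by positivity
      nlinarith [norm_nonneg v]
    have hn : ‖s • v‖ = s * ‖v‖ := by rw [norm_smul, Real.norm_of_nonneg hs0.le]
    have h3 := (abs_le.mp (h1 (s • v) (by rw [hn]; exact hs.trans_le (min_le_left _ _)))).1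
    have h4 := (abs_le.mp (h2 (s • v) (by rw [hn]; exact hs.trans_le (min_le_right _ _)))).1
    have h5 := hx (x + s • v)
    rw [add_sub_cancel_left, hsq, hn] at h5
    rw [hn] at h3 h4
    have e : ⟪p, s • v⟫ = ⟪a, s • v⟫ + ⟪b, s • v⟫ - 2 * c * ⟪x, s • v⟫ := by
      rw [← real_inner_smul_left, ← inner_add_left, ← inner_sub_left, hpe]
    have eA : ⟪A (s • v), s • v⟫ = s ^ 2 * ⟪A v, v⟫ := by
      rw [map_smul, real_inner_smul_left, real_inner_smul_right]; ring
    have eB : ⟪B (s • v), s • v⟫ = s ^ 2 * ⟪B v, v⟫ := by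
      rw [map_smul, real_inner_smul_left, real_inner_smul_right]; ring
    rw [eA] at h3
    rw [eB] at h4
    have h6 : s ^ 2 * (⟪A v, v⟫ + ⟪B v, v⟫) ≤ s ^ 2 * (2 * c * ‖v‖ ^ 2 + 4 * η * ‖v‖ ^ 2) := by
      nlinarith
    have h7 := le_of_mul_le_mul_left h6 (by positivity)
    have h8 : 4 * η * ‖v‖ ^ 2 ≤ ε := by
      rw [hη, mul_div_assoc', div_mul_eq_mul_div, div_le_iff₀ (by positivity)]
      nlinarith
    linarith
  · have h1 := hx y
    have h2 := real_inner_le_norm p (y - x)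
    have h3 : ‖p‖ * ‖y - x‖ ≤ δ * ‖y - x‖ := by gcongr
    linarith

/-- `U` is the convexified sup-convolution `x ↦ max_{z ∈ K} (u z - k |x - z|²) + k |x|²` of `u`
over `K`, and `y x` is a maximising point. -/
structure IsSupConv (K : Set E) (u : E → ℝ) (k : ℝ) (U : E → ℝ) (y : E → E) : Prop where
  mem : ∀ x, y x ∈ K
  eq : ∀ x, U x = u (y x) - k * ‖x - y x‖ ^ 2 + k * ‖x‖ ^ 2
  le : ∀ x, ∀ z ∈ K, u z - k * ‖x - z‖ ^ 2 + k * ‖x‖ ^ 2 ≤ U x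

lemma exists_isSupConv {E : Type*} [NormedAddCommGroup E] {K : Set E} (hK : IsCompact K) (hne : K.Nonempty) {u : E → ℝ}
    (hu : ContinuousOn u K) (k : ℝ) : ∃ U y, IsSupConv K u k U y := by
  have : ∀ x : E, ∃ z ∈ K, ∀ z' ∈ K, u z' - k * ‖x - z'‖ ^ 2 ≤ u z - k * ‖x - z‖ ^ 2 := by
    intro x
    have hc : ContinuousOn (fun z => u z - k * ‖x - z‖ ^ 2) K :=
      hu.sub (Continuous.continuousOn (by fun_prop))
    obtain ⟨z, hz, h⟩ := hK.exists_isMaxOn hne hc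
    exact ⟨z, hz, fun z' hz' => h hz'⟩
  choose y hy hmax using this
  exact ⟨fun x => u (y x) - k * ‖x - y x‖ ^ 2 + k * ‖x‖ ^ 2, y, hy, fun x => rfl,
    fun x z hz => by simpa using hmax x z hz⟩

namespace IsSupConv

variable {K : Set E} {u : E → ℝ} {k : ℝ} {U : E → ℝ} {y : E → E}

lemma isSubgrad (h : IsSupConv K u k U y) (x : E) : IsSubgrad U x ((2 * k) • y x) := by
  intro x'
  have h1 := h.eq x
  have h2 := h.le x' (y x) (h.mem x)
  rw [norm_sub_sq_real] at h1 h2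
  rw [real_inner_smul_left, inner_sub_right, real_inner_comm x', real_inner_comm x]
  linarith

lemma lipschitz (h : IsSupConv K u k U y) (hk : 0 ≤ k) {R : ℝ} (hR : ∀ z ∈ K, ‖z‖ ≤ R)
    (x x' : E) : U x' - U x ≤ 2 * k * R * ‖x' - x‖ := by
  have h1 := h.isSubgrad x' x
  have h2 := abs_le.mp (abs_real_inner_le_norm ((2 * k) • y x') (x - x'))
  rw [norm_smul, Real.norm_of_nonneg (by positivity), norm_sub_rev x x'] at h2
  have h3 : 2 * k * ‖y x'‖ * ‖x' - x‖ ≤ 2 * k * R * ‖x' - x‖ := by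
    gcongr
    exact hR _ (h.mem x')
  linarith [h2.1]

lemma continuous (h : IsSupConv K u k U y) (hk : 0 ≤ k) {R : ℝ} (hR : ∀ z ∈ K, ‖z‖ ≤ R) :
    Continuous U := by
  have hR0 : 0 ≤ R := (norm_nonneg _).trans (hR _ (h.mem 0))
  have : LipschitzWith ⟨2 * k * R, by positivity⟩ U := by
    apply LipschitzWith.of_dist_le_mul
    intro a b
    rw [Real.dist_eq, dist_eq_norm, abs_le]
    have h1 := h.lipschitz hk hR b a
    have h2 := h.lipschitz hk hR a b
    rw [norm_sub_rev] at h2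
    change -(2 * k * R * ‖a - b‖) ≤ U a - U b ∧ U a - U b ≤ 2 * k * R * ‖a - b‖
    constructor <;> linarith
  exact this.continuous

lemma subgrad_bound (h : IsSupConv K u k U y) (hk : 0 ≤ k) {R : ℝ} (hR : ∀ z ∈ K, ‖z‖ ≤ R)
    (x p : E) (hp : IsSubgrad U x p) : ‖p‖ ≤ 2 * k * R := by
  have h1 := hp (x + p)
  have h2 := h.lipschitz hk hR x (x + p)
  rw [add_sub_cancel_left] at h1 h2
  rw [real_inner_self_eq_norm_sq] at h1
  by_contra! hcon
  have : 0 ≤ ‖p‖ := norm_nonneg p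
  have hR0 : 0 ≤ R := (norm_nonneg _).trans (hR _ (h.mem 0))
  have : 0 ≤ 2 * k * R := by positivity
  nlinarith

/-- A second-order expansion of the sup-convolution at `x` transfers to a quadratic function
touching `u` from above at the maximising point `y x`. -/
lemma touch (h : IsSupConv K u k U y) {x a : E} {A : E →L[ℝ] E} (hA : HasSecondOrder U x a A)
    {η : ℝ} (hη : 0 < η) : ∃ r > 0, ∀ z ∈ K, ‖z - y x‖ < r →
      u z - u (y x) ≤ ⟪a - (2 * k) • x, z - y x⟫
        + 2⁻¹ * ⟪(A + (2 * η - 2 * k) • ContinuousLinearMap.id ℝ E) (z - y x), z - y x⟫ := by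
  obtain ⟨r, hr, h1⟩ := hA.2 η hη
  refine ⟨r, hr, fun z hz hzr => ?_⟩
  have h2 := (abs_le.mp (h1 _ hzr)).2
  have h3 := h.le (x + (z - y x)) z hz
  have h4 := h.eq x
  have e1 : x + (z - y x) - z = x - y x := by abel
  have e2 := norm_add_sq_real x (z - y x)
  rw [e1, e2] at h3
  have e3 : ⟪(A + (2 * η - 2 * k) • ContinuousLinearMap.id ℝ E) (z - y x), z - y x⟫
      = ⟪A (z - y x), z - y x⟫ + (2 * η - 2 * k) * ‖z - y x‖ ^ 2 := by
    simp only [add_apply, FunLike.coe_smul, Pi.smul_apply,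
      ContinuousLinearMap.id_apply]
    rw [inner_add_left, real_inner_smul_left, real_inner_self_eq_norm_sq]
  rw [e3, inner_sub_left, real_inner_smul_left]
  linarith

end IsSupConv

end Convolution

/-! ### Pucci operators and derivatives of test functions -/

section Calculus

variable {d : ℕ}

lemma quadForm_sub (M N : Matrix (Fin d) (Fin d) ℝ) (v : Eucl d) :
    quadForm (M - N) v = quadForm M v - quadForm N v := by
  simp only [quadForm, Matrix.sub_apply, sub_mul, Finset.sum_sub_distrib]

lemma isHermitian_of_isSymm {M : Matrix (Fin d) (Fin d) ℝ} (hM : M.IsSymm) : M.IsHermitian := by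
  rw [Matrix.IsHermitian, Matrix.conjTranspose_eq_transpose_of_trivial]
  exact hM

lemma pucciMinus_ge {lam Lam c : ℝ} (hlL : lam ≤ Lam) (hc : 0 ≤ c)
    {M : Matrix (Fin d) (Fin d) ℝ} (hM : M.IsSymm)
    (h : ∀ v : Eucl d, quadForm M v ≤ c * ‖v‖ ^ 2) :
    -lam * M.trace - (Lam - lam) * (d * c) ≤ pucciMinus lam Lam M := by
  have hH := isHermitian_of_isSymm hM
  have he : eigs M = hH.eigenvalues := by rw [eigs, dif_pos hH]
  have hle : ∀ i, eigs M i ≤ c := by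
    intro i
    have h1 := h (hH.eigenvectorBasis i)
    rw [hH.eigenvectorBasis.orthonormal.1 i] at h1
    rw [he, hH.eigenvalues_eq]
    simp only [RCLike.re_to_real]
    refine le_trans (le_of_eq ?_) (h1.trans (by simp))
    simp only [dotProduct, Matrix.mulVec, quadForm, Finset.mul_sum, Pi.star_apply, star_trivial]
    refine Finset.sum_congr rfl fun i _ => Finset.sum_congr rfl fun j _ => ?_
    ring
  have htr : M.trace = posPartTrace M - negPartTrace M := by
    rw [hH.trace_eq_sum_eigenvalues, posPartTrace, negPartTrace, ← Finset.sum_sub_distrib, he]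
    refine Finset.sum_congr rfl fun i _ => ?_
    simp only [RCLike.ofReal_real_eq_id, id]
    rcases le_total (hH.eigenvalues i) 0 with h | h
    · rw [max_eq_right h, max_eq_left (by linarith)]; ring
    · rw [max_eq_left h, max_eq_right (by linarith)]; ring
  have hpos : posPartTrace M ≤ d * c := by
    calc posPartTrace M ≤ ∑ _i : Fin d, c := Finset.sum_le_sum fun i _ => max_le (hle i) hc
      _ = d * c := by simp
  rw [pucciMinus, htr]
  nlinarith

lemma trace_le {c : ℝ} {M : Matrix (Fin d) (Fin d) ℝ}
    (h : ∀ v : Eucl d, quadForm M v ≤ c * ‖v‖ ^ 2) : M.trace ≤ d * c := by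
  have : ∀ i, M i i ≤ c := by
    intro i
    have := h (EuclideanSpace.single i 1)
    simpa [quadForm, Finset.sum_ite_eq] using this
  calc M.trace ≤ ∑ _i : Fin d, c := Finset.sum_le_sum fun i _ => this i
    _ = d * c := by simp

lemma pucciMinus_ge' {lam Lam c : ℝ} (hlam : 0 < lam) (hlL : lam ≤ Lam) (hc : 0 ≤ c)
    {M : Matrix (Fin d) (Fin d) ℝ} (hM : M.IsSymm)
    (h : ∀ v : Eucl d, quadForm M v ≤ c * ‖v‖ ^ 2) :
    -(Lam * (d * c)) ≤ pucciMinus lam Lam M := by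
  have h1 := pucciMinus_ge hlL hc hM h
  have h2 := mul_le_mul_of_nonneg_left (trace_le h) hlam.le
  linarith

lemma sum_single (v : Eucl d) : ∑ i, v i • (EuclideanSpace.single i (1 : ℝ) : Eucl d) = v := by
  ext j
  simp [Pi.single_apply]

/-- The symmetric matrix of the quadratic form `v ↦ ⟪S v, v⟫`. -/
def symMat (S : Eucl d →L[ℝ] Eucl d) : Matrix (Fin d) (Fin d) ℝ :=
  Matrix.of fun i j =>
    2⁻¹ * (⟪S (EuclideanSpace.single j 1), EuclideanSpace.single i 1⟫
      + ⟪S (EuclideanSpace.single i 1), EuclideanSpace.single j 1⟫)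

lemma symMat_isSymm (S : Eucl d →L[ℝ] Eucl d) : (symMat S).IsSymm := by
  ext i j
  simp only [symMat, Matrix.transpose_apply, Matrix.of_apply]
  ring

lemma quadForm_symMat (S : Eucl d →L[ℝ] Eucl d) (v : Eucl d) :
    quadForm (symMat S) v = ⟪S v, v⟫ := by
  have e : ⟪S v, v⟫ = ∑ i, ∑ j, v i * v j *
      ⟪S (EuclideanSpace.single i 1), (EuclideanSpace.single j (1 : ℝ) : Eucl d)⟫ := by
    conv_lhs => rw [← sum_single v]
    rw [map_sum, sum_inner]
    refine Finset.sum_congr rfl fun i _ => ?_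
    rw [inner_sum]
    refine Finset.sum_congr rfl fun j _ => ?_
    rw [map_smul, real_inner_smul_left, real_inner_smul_right]
    ring
  have e' := e
  rw [Finset.sum_comm] at e'
  have : quadForm (symMat S) v = 2⁻¹ * (⟪S v, v⟫ + ⟪S v, v⟫) := by
    nth_rewrite 1 [e']
    rw [e, ← Finset.sum_add_distrib, Finset.mul_sum, quadForm]
    refine Finset.sum_congr rfl fun i _ => ?_
    rw [← Finset.sum_add_distrib, Finset.mul_sum]
    refine Finset.sum_congr rfl fun j _ => ?_
    simp only [symMat, Matrix.of_apply]
    ring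
  rw [this]; ring

lemma gradAt_eq {φ : Eucl d → ℝ} {x : Eucl d} {q : Eucl d}
    (h : HasFDerivAt φ (innerSL ℝ q) x) : gradAt φ x = q := by
  ext i
  simp [gradAt, h.fderiv, EuclideanSpace.equiv, EuclideanSpace.inner_single_right]

/-- The quadratic polynomial centred at `y` with gradient `q` and second-order part `S`. -/
def quadPoly (q y : Eucl d) (S : Eucl d →L[ℝ] Eucl d) (z : Eucl d) : ℝ :=
  ⟪q, z - y⟫ + 2⁻¹ * ⟪S (z - y), z - y⟫

lemma quadPoly_contDiff (q y : Eucl d) (S : Eucl d →L[ℝ] Eucl d) :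
    ContDiff ℝ 2 (quadPoly q y S) := by
  unfold quadPoly
  have h : ContDiff ℝ 2 (fun z : Eucl d => z - y) := contDiff_id.sub contDiff_const
  exact (contDiff_const.inner ℝ h).add (contDiff_const.mul ((S.contDiff.comp h).inner ℝ h))

lemma quadPoly_hasFDerivAt (q y : Eucl d) (S : Eucl d →L[ℝ] Eucl d) (z : Eucl d) :
    HasFDerivAt (quadPoly q y S)
      (innerSL ℝ q + (2⁻¹ : ℝ) • (innerSL ℝ (S (z - y)) + (innerSL ℝ (z - y)).comp S)) z := by
  have h0 : HasFDerivAt (fun z : Eucl d => z - y) (ContinuousLinearMap.id ℝ _) z :=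
    (hasFDerivAt_id z).sub_const y
  have h1 : HasFDerivAt (fun z : Eucl d => ⟪q, z - y⟫) (innerSL ℝ q) z := by
    have := ((innerSL ℝ q).hasFDerivAt (x := z - y)).comp z h0
    simpa using! this
  have h2 : HasFDerivAt (fun z : Eucl d => S (z - y)) S z := by
    have := (S.hasFDerivAt (x := z - y)).comp z h0
    rwa [ContinuousLinearMap.comp_id] at this
  have h3 := h2.inner ℝ h0
  refine (h1.add (h3.const_mul 2⁻¹)).congr_fderiv ?_
  ext v
  simp [fderivInnerCLM_apply, real_inner_comm, inner_sub_left, inner_sub_right]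
  ring

lemma gradAt_quadPoly (q y : Eucl d) (S : Eucl d →L[ℝ] Eucl d) : gradAt (quadPoly q y S) y = q :=
  gradAt_eq (by simpa using quadPoly_hasFDerivAt q y S y)

lemma hessAt_quadPoly (q y : Eucl d) (S : Eucl d →L[ℝ] Eucl d) (z : Eucl d) :
    hessAt (quadPoly q y S) z = symMat S := by
  ext i j
  simp only [hessAt, symMat, Matrix.of_apply]
  have e : (fun z => fderiv ℝ (quadPoly q y S) z (EuclideanSpace.single j 1))
      = fun z => ⟪q, EuclideanSpace.single j (1:ℝ)⟫
        + 2⁻¹ * (⟪S (z - y), EuclideanSpace.single j 1⟫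
          + ⟪z - y, S (EuclideanSpace.single j 1)⟫) := by
    funext z
    rw [(quadPoly_hasFDerivAt q y S z).fderiv]
    simp [inner_sub_left]
    ring
  rw [e]
  have h0 : HasFDerivAt (fun z : Eucl d => z - y) (ContinuousLinearMap.id ℝ _) z :=
    (hasFDerivAt_id z).sub_const y
  have h2 : HasFDerivAt (fun z : Eucl d => S (z - y)) S z := by
    have := (S.hasFDerivAt (x := z - y)).comp z h0
    rwa [ContinuousLinearMap.comp_id] at this
  have h3 := h2.inner ℝ (hasFDerivAt_const (EuclideanSpace.single j (1:ℝ) : Eucl d) z)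
  have h4 := h0.inner ℝ (hasFDerivAt_const (S (EuclideanSpace.single j (1:ℝ) : Eucl d)) z)
  have h5 := ((h3.add h4).const_mul (2⁻¹ : ℝ)).const_add ⟪q, (EuclideanSpace.single j (1:ℝ) : Eucl d)⟫
  have h6 := h5.fderiv
  simp only [Pi.add_apply] at h6
  rw [h6]
  simp [fderivInnerCLM_apply, real_inner_comm]
  ring

end Calculus

/-! ### Comparison of viscosity sub- and supersolutions -/

section Comparison

variable {d : ℕ}

/-- The form of ellipticity used in the comparison principle, for a pair of operators whose
dependence on the point is controlled by `σ` up to the constant `κ`. -/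
def CompStruct (Ω : Set (Eucl d)) (F₁ F₂ : Matrix (Fin d) (Fin d) ℝ → Eucl d → ℝ → Eucl d → ℝ)
    (A gam κ : ℝ) (σ : ℝ → ℝ) : Prop :=
  ∀ (M N : Matrix (Fin d) (Fin d) ℝ) (P Q : Eucl d) (r s c : ℝ), ∀ x ∈ Ω, ∀ y ∈ Ω,
    M.IsSymm → N.IsSymm → 0 ≤ c → (∀ v : Eucl d, quadForm (M - N) v ≤ c * ‖v‖ ^ 2) → s ≤ r →
    F₂ N Q s y - F₁ M P r x ≤ A * c + gam * ‖P - Q‖ + σ ‖x - y‖ + κ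

lemma isLocalMax_of_touch {Ω : Set (Eucl d)} (hO : IsOpen Ω) {u φ : Eucl d → ℝ} {y : Eucl d}
    (hy : y ∈ Ω) {r : ℝ} (hr : 0 < r)
    (h : ∀ z ∈ closure Ω, ‖z - y‖ < r → u z - u y ≤ φ z - φ y) :
    IsLocalMax (fun z => u z - φ z) y := by
  filter_upwards [hO.mem_nhds hy, ball_mem_nhds y hr] with z hz hzr
  have := h z (subset_closure hz) (by rwa [← dist_eq_norm])
  linarith

/-- The maximum of `U + V - 2 k |·|²` minus a linear form is attained when `U`, `V` are
convexified sup-convolutions over a bounded set. -/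
lemma exists_max_supConv {K : Set (Eucl d)} {u v : Eucl d → ℝ} {k R D : ℝ} (hk : 0 < k)
    (hD : ∀ z ∈ K, ‖z‖ ≤ D) (hu : ∀ z ∈ K, u z ≤ R) (hv : ∀ z ∈ K, v z ≤ R)
    {U V : Eucl d → ℝ} {y y' : Eucl d → Eucl d} (hU : IsSupConv K u k U y)
    (hV : IsSupConv K v k V y') (p : Eucl d) :
    ∃ x, ∀ z, U z + V z - (2 * k) * ‖z‖ ^ 2 ≤ U x + V x - (2 * k) * ‖x‖ ^ 2 + ⟪p, z - x⟫ := by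
  have hcont : Continuous (fun z => U z + V z - (2 * k) * ‖z‖ ^ 2 - ⟪p, z⟫) :=
    (((hU.continuous hk.le hD).add (hV.continuous hk.le hD)).sub (by fun_prop)).sub
      (continuous_const.inner continuous_id)
  set w0 := U 0 + V 0 with hw0
  have hev : ∀ᶠ z in cocompact (Eucl d), U z + V z - (2 * k) * ‖z‖ ^ 2 - ⟪p, z⟫
      ≤ U 0 + V 0 - (2 * k) * ‖(0 : Eucl d)‖ ^ 2 - ⟪p, 0⟫ := by
    have := (tendsto_norm_cocompact_atTop (E := Eucl d)).eventually_ge_atTop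
      (D + (‖p‖ + 1) / k + |2 * R + ‖p‖ * D - w0|)
    filter_upwards [this] with z hz
    set t := ‖z - y z‖ with ht
    have h1 : ‖z‖ ≤ t + D := by
      have := norm_add_le (z - y z) (y z)
      rw [sub_add_cancel] at this
      exact this.trans (by gcongr; exact hD _ (hU.mem z))
    have hab := le_abs_self (2 * R + ‖p‖ * D - w0)
    have h2 : (‖p‖ + 1) / k ≤ t := by
      have := abs_nonneg (2 * R + ‖p‖ * D - w0)
      linarith
    have h2' : ‖p‖ + 1 ≤ k * t := by
      rw [div_le_iff₀ hk] at h2; linarith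
    have h3 : 2 * R + ‖p‖ * D - w0 ≤ t := by
      have : 0 ≤ (‖p‖ + 1) / k := by positivity
      linarith
    have h4 := hU.eq z
    have h5 := hV.eq z
    have h6 := hu _ (hU.mem z)
    have h7 := hv _ (hV.mem z)
    have h8 := (abs_le.mp (abs_real_inner_le_norm p z)).1
    have h9 : 0 ≤ k * ‖z - y' z‖ ^ 2 := by positivity
    have ht0 : 0 ≤ t := norm_nonneg _
    have h10 : (‖p‖ + 1) * t ≤ k * t * t := by gcongr
    have h11 : ‖p‖ * ‖z‖ ≤ ‖p‖ * (t + D) := by gcongr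
    rw [← ht] at h4
    simp only [norm_zero, inner_zero_right]
    nlinarith
  obtain ⟨x, hx⟩ := hcont.exists_forall_ge' 0 hev
  refine ⟨x, fun z => ?_⟩
  have := hx z
  rw [inner_sub_right]
  linarith

set_option maxHeartbeats 1000000 in
/-- Comparison principle: `u - v ≤ b` on the boundary extends to the interior when the data differ
by at most `b / h`. At an interior maximum of `u - v` exceeding `b`, sup-convolutions of `u` and
`-v` have second-order expansions at a common contact point, which gives ordered test functions for
`u` and `v` at nearby points. -/
theorem comparison {Ω : Set (Eucl d)} (hO : IsOpen Ω) (hbd : Bornology.IsBounded Ω)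
    {F₁ F₂ : Matrix (Fin d) (Fin d) ℝ → Eucl d → ℝ → Eucl d → ℝ} {A gam κ h b : ℝ} {σ : ℝ → ℝ}
    (hA : 0 ≤ A) (hgam : 0 ≤ gam) (hh : 0 < h) (hb : 0 ≤ b) (hσ : IsModulus σ)
    (hF : CompStruct Ω F₁ F₂ A gam κ σ) {u v f g : Eucl d → ℝ}
    (hu : ContinuousOn u (closure Ω)) (hv : ContinuousOn v (closure Ω))
    (hg : ContinuousOn g (closure Ω)) (hfg : ∀ x ∈ Ω, f x - g x + κ ≤ b / h)
    (hfr : ∀ x ∈ frontier Ω, u x - v x ≤ b)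
    (hsub : ViscSubsol Ω (fun M P r x => F₁ M P r x + r / h) f u)
    (hsup : ViscSupersol Ω (fun M P r x => F₂ M P r x + r / h) g v) :
    ∀ x ∈ closure Ω, u x - v x ≤ b := by
  by_contra! hcon
  obtain ⟨x₁, hx₁, hx₁b⟩ := hcon
  set K := closure Ω with hKd
  have hK : IsCompact K := hbd.isCompact_closure
  have hne : K.Nonempty := ⟨x₁, hx₁⟩
  obtain ⟨xs, hxs, hmaxs⟩ := hK.exists_isMaxOn hne (hu.sub hv)
  set θ := u xs - v xs with hθ
  set e := θ - b with he
  have he0 : 0 < e := by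
    have : u x₁ - v x₁ ≤ θ := hmaxs hx₁
    linarith
  obtain ⟨R₁, hR₁⟩ := hK.exists_bound_of_continuousOn hu
  obtain ⟨R₂, hR₂⟩ := hK.exists_bound_of_continuousOn hv
  set R := max R₁ R₂ with hR
  have huR : ∀ z ∈ K, |u z| ≤ R := fun z hz => (hR₁ z hz).trans (le_max_left _ _)
  have hvR : ∀ z ∈ K, |v z| ≤ R := fun z hz => (hR₂ z hz).trans (le_max_right _ _)
  have hR0 : 0 ≤ R := (abs_nonneg _).trans (huR _ hx₁)
  obtain ⟨D, hD0, hD⟩ := hK.isBounded.exists_pos_norm_le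
  -- Uniform moduli of continuity.
  have huc := Metric.uniformContinuousOn_iff.mp (hK.uniformContinuousOn_of_continuous hu)
  have hvc := Metric.uniformContinuousOn_iff.mp (hK.uniformContinuousOn_of_continuous hv)
  have hgc := Metric.uniformContinuousOn_iff.mp (hK.uniformContinuousOn_of_continuous hg)
  obtain ⟨ρ₁, hρ₁, h₁⟩ := huc (e / 4) (by positivity)
  obtain ⟨ρ₂, hρ₂, h₂⟩ := hvc (e / 4) (by positivity)
  obtain ⟨ρ₃, hρ₃, h₃⟩ := hgc (e / (8 * h)) (by positivity)
  obtain ⟨ρ₄, hρ₄, h₄⟩ := Metric.continuous_iff.mp hσ.2.1 0 (e / (8 * h)) (by positivity)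
  obtain ⟨ρ, hρ, hρ1, hρm⟩ : ∃ ρ > 0, ρ ≤ 1 ∧
      2 * ρ ≤ min (min ρ₁ ρ₂) (min ρ₃ ρ₄) := by
    refine ⟨min 1 (min (min ρ₁ ρ₂) (min ρ₃ ρ₄) / 2), by positivity, min_le_left _ _, ?_⟩
    have := min_le_right 1 (min (min ρ₁ ρ₂) (min ρ₃ ρ₄) / 2)
    linarith
  obtain ⟨δ, hδ, hδ1, hδ2, hδ3⟩ : ∃ δ > 0, δ ≤ 1 ∧ gam * δ ≤ e / (8 * h) ∧
      δ * (1 + 2 * D) ≤ e / 4 := by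
    refine ⟨min 1 (min (e / (8 * h) / (gam + 1)) (e / 4 / (1 + 2 * D))), by positivity,
      min_le_left _ _, ?_, ?_⟩
    · calc _ ≤ gam * (e / (8 * h) / (gam + 1)) := by
            gcongr; exact (min_le_right _ _).trans (min_le_left _ _)
        _ ≤ (gam + 1) * (e / (8 * h) / (gam + 1)) := by gcongr; linarith
        _ = _ := by field_simp
    · calc _ ≤ (e / 4 / (1 + 2 * D)) * (1 + 2 * D) := by
            gcongr; exact (min_le_right _ _).trans (min_le_right _ _)
        _ = _ := by field_simp
  obtain ⟨τ, hτ, hτ1⟩ : ∃ τ > 0, A * (4 * τ) ≤ e / (8 * h) := by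
    refine ⟨e / (8 * h) / (4 * (A + 1)), by positivity, ?_⟩
    calc _ ≤ (A + 1) * (4 * (e / (8 * h) / (4 * (A + 1)))) := by gcongr; linarith
      _ = _ := by field_simp
  set k := (2 * R + 2 * D + 2) / ρ ^ 2 with hk
  have hk0 : 0 < k := by positivity
  have hkρ : k * ρ ^ 2 = 2 * R + 2 * D + 2 := by rw [hk]; field_simp
  obtain ⟨U, y, hU⟩ := exists_isSupConv hK hne hu k
  obtain ⟨V, y', hV⟩ := exists_isSupConv hK hne hv.neg k
  obtain ⟨x, a, a', B, B', hB, hB', haa, hBB, hx⟩ := exists_contact_second_order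
    (hU.continuous hk0.le hD) (hV.continuous hk0.le hD)
    (fun x => ⟨_, hU.isSubgrad x⟩) (fun x => ⟨_, hV.isSubgrad x⟩)
    (hU.subgrad_bound hk0.le hD) (hV.subgrad_bound hk0.le hD)
    (c := 2 * k) (δ := δ) (by positivity) hδ
    (fun p _ => exists_max_supConv hk0 hD (fun z hz => (abs_le.mp (huR z hz)).2)
      (fun z hz => by have := (abs_le.mp (hvR z hz)).1; simp only [Pi.neg_apply]; linarith) hU hV p)
  set s := ‖x - y x‖ with hs
  set s' := ‖x - y' x‖ with hs'
  have hs0 : 0 ≤ s := norm_nonneg _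
  have hs0' : 0 ≤ s' := norm_nonneg _
  have hyK := hU.mem x
  have hyK' := hV.mem x
  have hU1 := hU.eq x
  have hV1 := hV.eq x
  have hU2 := hU.le xs xs hxs
  have hV2 := hV.le xs xs hxs
  rw [sub_self, norm_zero] at hU2 hV2
  rw [← hs] at hU1
  rw [← hs'] at hV1
  simp only [Pi.neg_apply] at hV1 hV2
  have hdist : ‖xs - x‖ ≤ s + 2 * D := by
    have h1 : ‖xs - x‖ ≤ ‖xs - y x‖ + ‖y x - x‖ := by
      have := norm_add_le (xs - y x) (y x - x)
      rwa [sub_add_sub_cancel] at this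
    have h2 := norm_sub_le xs (y x)
    have h3 := hD _ hxs
    have h4 := hD _ hyK
    rw [norm_sub_rev (y x) x, ← hs] at h1
    linarith
  have hmain : θ - δ * (s + 2 * D) ≤ u (y x) - v (y' x) - k * s ^ 2 - k * s' ^ 2 := by
    have h1 := hx xs
    have h2 : δ * ‖xs - x‖ ≤ δ * (s + 2 * D) := by gcongr
    linarith
  have huy := abs_le.mp (huR _ hyK)
  have hvy := abs_le.mp (hvR _ hyK')
  have hks : k * (s ^ 2 + s' ^ 2) ≤ 2 * R + s + 2 * D := by
    have : δ * (s + 2 * D) ≤ 1 * (s + 2 * D) := by gcongr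
    have hθ0 : 0 ≤ θ := by linarith
    linarith [mul_add k (s ^ 2) (s' ^ 2)]
  have hk1 : 2 * R + 2 * D + 2 ≤ k := by
    have h1 : ρ ^ 2 ≤ 1 := pow_le_one₀ hρ.le hρ1
    have : k * ρ ^ 2 ≤ k * 1 := by gcongr
    linarith
  have hs1 : s ≤ 1 := by
    by_contra! hcon
    have h1 : (2 * R + 2 * D + 2) * (s ^ 2 + s' ^ 2) ≤ k * (s ^ 2 + s' ^ 2) := by gcongr
    have h0 : 0 ≤ s' ^ 2 := sq_nonneg _
    have h3 : s ≤ s ^ 2 + s' ^ 2 := by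
      have : s * 1 ≤ s * s := by gcongr
      linarith [sq s]
    have h4 : (2 * R + 2 * D + 2) * s ≤ (2 * R + 2 * D + 2) * (s ^ 2 + s' ^ 2) := by gcongr
    have h5 : (2 * R + 2 * D + 1) * 1 < (2 * R + 2 * D + 1) * s := by gcongr
    linarith
  have hss : s ^ 2 + s' ^ 2 < ρ ^ 2 := by
    have : k * (s ^ 2 + s' ^ 2) < k * ρ ^ 2 := by linarith
    exact lt_of_mul_lt_mul_left this hk0.le
  have hsρ : s < ρ := lt_of_pow_lt_pow_left₀ 2 hρ.le (by linarith [sq_nonneg s'])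
  have hsρ' : s' < ρ := lt_of_pow_lt_pow_left₀ 2 hρ.le (by linarith [sq_nonneg s])
  have hyy : ‖y x - y' x‖ < 2 * ρ := by
    have := norm_add_le (y x - x) (x - y' x)
    rw [sub_add_sub_cancel, norm_sub_rev (y x) x] at this
    linarith
  have hyy' : dist (y x) (y' x) < 2 * ρ := by rwa [dist_eq_norm]
  have hval : θ - e / 4 ≤ u (y x) - v (y' x) := by
    have h1 : δ * (s + 2 * D) ≤ δ * (1 + 2 * D) := by gcongr
    have h2 : 0 ≤ k * s ^ 2 + k * s' ^ 2 := by positivity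
    linarith
  simp only [le_min_iff] at hρm
  have hd1 := h₁ _ hyK _ hyK' (hyy'.trans_le hρm.1.1)
  have hd2 := h₂ _ hyK _ hyK' (hyy'.trans_le hρm.1.2)
  have hd3 := h₃ _ hyK _ hyK' (hyy'.trans_le hρm.2.1)
  have hd4 : σ ‖y x - y' x‖ < e / (8 * h) := by
    have := h₄ ‖y x - y' x‖ (by
      rw [Real.dist_eq, sub_zero, abs_norm]; exact hyy.trans_le hρm.2.2)
    rw [hσ.2.2, Real.dist_eq, sub_zero] at this
    exact (le_abs_self _).trans_lt this
  rw [Real.dist_eq, abs_lt] at hd1 hd2 hd3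
  -- Both touching points lie in the open set.
  have hinterior : ∀ z ∈ K, b < u z - v z → z ∈ Ω := by
    intro z hz hlt
    by_contra hzO
    have : z ∈ frontier Ω := by
      rw [frontier, hO.interior_eq]; exact ⟨hz, hzO⟩
    linarith [hfr z this]
  have hyO : y x ∈ Ω := hinterior _ hyK (by linarith)
  have hyO' : y' x ∈ Ω := hinterior _ hyK' (by linarith)
  obtain ⟨r₁, hr₁, ht₁⟩ := hU.touch hB hτ
  obtain ⟨r₂, hr₂, ht₂⟩ := hV.touch hB' hτ
  set S₁ := B + (2 * τ - 2 * k) • ContinuousLinearMap.id ℝ (Eucl d) with hS₁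
  set S₂ := B' + (2 * τ - 2 * k) • ContinuousLinearMap.id ℝ (Eucl d) with hS₂
  have hmax1 : IsLocalMax (fun z => u z - quadPoly (a - (2 * k) • x) (y x) S₁ z) (y x) := by
    refine isLocalMax_of_touch hO hyO hr₁ fun z hz hzr => ?_
    have := ht₁ z hz hzr
    simpa [quadPoly] using this
  have hmin1 : IsLocalMin (fun z => v z - quadPoly (-(a' - (2 * k) • x)) (y' x) (-S₂) z)
      (y' x) := by
    have := isLocalMax_of_touch (u := fun z => - v z)
      (φ := quadPoly (a' - (2 * k) • x) (y' x) S₂) hO hyO' hr₂ fun z hz hzr => by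
      have := ht₂ z hz hzr
      simpa [quadPoly] using this
    have := this.neg
    refine this.congr (Eventually.of_forall fun z => ?_)
    simp only [quadPoly, inner_neg_left, neg_apply]
    ring
  have e1 := hsub _ hyO _ (quadPoly_contDiff _ _ _).contDiffAt hmax1
  have e2 := hsup _ hyO' _ (quadPoly_contDiff _ _ _).contDiffAt hmin1
  rw [gradAt_quadPoly, hessAt_quadPoly] at e1 e2
  have e3 := hF (symMat S₁) (symMat (-S₂)) (a - (2 * k) • x) (-(a' - (2 * k) • x))
    (u (y x)) (v (y' x)) (4 * τ) _ hyO _ hyO' (symMat_isSymm _) (symMat_isSymm _) (by positivity)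
    (fun w => by
      rw [quadForm_sub, quadForm_symMat, quadForm_symMat, hS₁, hS₂]
      simp only [add_apply, neg_apply, FunLike.coe_smul, Pi.smul_apply,
        ContinuousLinearMap.id_apply, inner_add_left, inner_neg_left, real_inner_smul_left,
        real_inner_self_eq_norm_sq]
      have := hBB w
      linarith) (by linarith)
  have e4 : a - (2 * k) • x - -(a' - (2 * k) • x) = a + a' - (2 * (2 * k)) • x := by
    module
  rw [e4] at e3
  have e5 : gam * ‖a + a' - (2 * (2 * k)) • x‖ ≤ gam * δ := by gcongr
  have e6 := hfg _ hyO
  simp only at e1 e2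
  have e7 : (u (y x) - v (y' x)) / h ≤ b / h + 4 * (e / (8 * h)) := by
    rw [sub_div]
    linarith
  have e8 : b / h + 4 * (e / (8 * h)) = (b + e / 2) / h := by field_simp; ring
  rw [e8, div_le_div_iff_of_pos_right hh] at e7
  linarith

end Comparison

/-! ### Gradients and Hessians of test functions -/

section Hessian

variable {d : ℕ}

lemma differentiable_fderiv {φ : Eucl d → ℝ} (h : ContDiff ℝ 2 φ) :
    Differentiable ℝ (fderiv ℝ φ) :=
  (h.fderiv_right (m := 1) (by norm_num)).differentiable (by norm_num)

lemma hessAt_eq {φ : Eucl d → ℝ} (h : ContDiff ℝ 2 φ) (x : Eucl d) :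
    hessAt φ x = Matrix.of fun i j =>
      fderiv ℝ (fderiv ℝ φ) x (EuclideanSpace.single i 1) (EuclideanSpace.single j 1) := by
  ext i j
  simp only [hessAt, Matrix.of_apply]
  rw [fderiv_clm_apply (differentiable_fderiv h x) (differentiableAt_const _)]
  simp

lemma hessAt_isSymm {φ : Eucl d → ℝ} (h : ContDiff ℝ 2 φ) (x : Eucl d) :
    (hessAt φ x).IsSymm := by
  rw [hessAt_eq h]
  ext i j
  simp only [Matrix.transpose_apply, Matrix.of_apply]
  exact (h.contDiffAt.isSymmSndFDerivAt (by simp)) _ _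

lemma quadForm_hessAt {φ : Eucl d → ℝ} (h : ContDiff ℝ 2 φ) (x v : Eucl d) :
    quadForm (hessAt φ x) v = fderiv ℝ (fderiv ℝ φ) x v v := by
  rw [hessAt_eq h, quadForm]
  have e : ∀ w : Eucl d, fderiv ℝ (fderiv ℝ φ) x w v
      = ∑ j, v j * fderiv ℝ (fderiv ℝ φ) x w (EuclideanSpace.single j 1) := fun w => by
    conv_lhs => rw [← sum_single v]
    rw [map_sum]
    simp only [map_smul, smul_eq_mul]
  have e' : fderiv ℝ (fderiv ℝ φ) x v v
      = ∑ i, v i * fderiv ℝ (fderiv ℝ φ) x (EuclideanSpace.single i 1) v := by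
    have := congrArg (fun L : Eucl d →L[ℝ] ℝ => L v)
      (congrArg (fderiv ℝ (fderiv ℝ φ) x) (sum_single v).symm)
    simpa [map_sum, sum_apply] using this
  rw [e']
  refine Finset.sum_congr rfl fun i _ => ?_
  rw [e, Finset.mul_sum]
  refine Finset.sum_congr rfl fun j _ => ?_
  simp only [Matrix.of_apply]
  ring

lemma gradAt_apply (φ : Eucl d → ℝ) (x : Eucl d) (i : Fin d) :
    gradAt φ x i = fderiv ℝ φ x (EuclideanSpace.single i 1) := rfl

lemma inner_gradAt (φ : Eucl d → ℝ) (x v : Eucl d) : ⟪gradAt φ x, v⟫ = fderiv ℝ φ x v := by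
  conv_rhs => rw [← sum_single v]
  rw [map_sum, PiLp.inner_apply]
  refine Finset.sum_congr rfl fun i _ => ?_
  rw [gradAt_apply, map_smul]
  simp

lemma continuous_gradAt {φ : Eucl d → ℝ} (h : ContDiff ℝ 2 φ) : Continuous (gradAt φ) := by
  refine (EuclideanSpace.equiv (Fin d) ℝ).symm.continuous.comp (continuous_pi fun i => ?_)
  exact (h.continuous_fderiv (by norm_num)).clm_apply continuous_const

lemma continuous_hessAt {φ : Eucl d → ℝ} (h : ContDiff ℝ 2 φ) : Continuous (hessAt φ) := by
  have h1 : Continuous (fderiv ℝ (fderiv ℝ φ)) :=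
    (h.fderiv_right (m := 1) (by norm_num)).continuous_fderiv (by norm_num)
  have : hessAt φ = fun x => Matrix.of fun i j =>
      fderiv ℝ (fderiv ℝ φ) x (EuclideanSpace.single i 1) (EuclideanSpace.single j 1) :=
    funext fun x => hessAt_eq h x
  rw [this]
  refine continuous_matrix fun i j => ?_
  exact (h1.clm_apply continuous_const).clm_apply continuous_const

lemma gradAt_neg (φ : Eucl d → ℝ) (x : Eucl d) : gradAt (fun y => -φ y) x = -gradAt φ x := by
  ext i
  rw [PiLp.neg_apply, gradAt_apply, gradAt_apply, fderiv_fun_neg]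
  rfl

lemma hessAt_neg (φ : Eucl d → ℝ) (x : Eucl d) : hessAt (fun y => -φ y) x = -hessAt φ x := by
  ext i j
  simp only [hessAt, Matrix.of_apply, Matrix.neg_apply, fderiv_fun_neg, neg_apply]

lemma gradAt_add {φ ψ : Eucl d → ℝ} (h : ContDiff ℝ 2 φ) (h' : ContDiff ℝ 2 ψ) (x : Eucl d) :
    gradAt (fun y => φ y + ψ y) x = gradAt φ x + gradAt ψ x := by
  ext i
  rw [PiLp.add_apply, gradAt_apply, gradAt_apply, gradAt_apply,
    fderiv_fun_add (h.differentiable (by norm_num) x) (h'.differentiable (by norm_num) x)]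
  rfl

lemma hessAt_add {φ ψ : Eucl d → ℝ} (h : ContDiff ℝ 2 φ) (h' : ContDiff ℝ 2 ψ) (x : Eucl d) :
    hessAt (fun y => φ y + ψ y) x = hessAt φ x + hessAt ψ x := by
  have e : fderiv ℝ (fun y => φ y + ψ y) = fun x => fderiv ℝ φ x + fderiv ℝ ψ x := funext fun x =>
    fderiv_fun_add (h.differentiable (by norm_num) x) (h'.differentiable (by norm_num) x)
  ext i j
  rw [hessAt_eq (h.add h'), hessAt_eq h, hessAt_eq h', e,
    fderiv_fun_add (differentiable_fderiv h x) (differentiable_fderiv h' x)]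
  rfl

lemma gradAt_comp_sub (φ : Eucl d → ℝ) (e x : Eucl d) :
    gradAt (fun y => φ (y - e)) x = gradAt φ (x - e) := by
  ext i
  rw [gradAt_apply, gradAt_apply, fderiv_comp_sub]

lemma hessAt_comp_sub (φ : Eucl d → ℝ) (e x : Eucl d) :
    hessAt (fun y => φ (y - e)) x = hessAt φ (x - e) := by
  ext i j
  simp only [hessAt, Matrix.of_apply, fderiv_comp_sub]
  rw [fderiv_comp_sub (f := fun y => fderiv ℝ φ y (EuclideanSpace.single j 1))]

lemma gradAt_const (c : ℝ) (x : Eucl d) : gradAt (fun _ => c) x = 0 := by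
  ext i
  rw [gradAt_apply]; simp

lemma hessAt_const (c : ℝ) (x : Eucl d) : hessAt (fun _ => c) x = 0 := by
  ext i j
  simp [hessAt]

lemma pucciMinus_zero (lam Lam : ℝ) : pucciMinus lam Lam (0 : Matrix (Fin d) (Fin d) ℝ) = 0 := by
  have h : eigs (0 : Matrix (Fin d) (Fin d) ℝ) = 0 := by
    have hH : (0 : Matrix (Fin d) (Fin d) ℝ).IsHermitian := Matrix.isHermitian_zero
    rw [eigs, dif_pos hH, hH.eigenvalues_eq_zero_iff]
  simp [pucciMinus, posPartTrace, negPartTrace, h]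

lemma quartic_contDiff (x₀ : Eucl d) : ContDiff ℝ 2 (fun x : Eucl d => ‖x - x₀‖ ^ 4) := by
  have : (fun x : Eucl d => ‖x - x₀‖ ^ 4) = fun x => (‖x - x₀‖ ^ 2) ^ 2 := by
    funext x; ring
  rw [this]
  exact ((contDiff_id.sub contDiff_const).norm_sq ℝ).pow 2

lemma quartic_hasFDerivAt (x₀ x : Eucl d) : HasFDerivAt (fun x : Eucl d => ‖x - x₀‖ ^ 4)
    (innerSL ℝ ((4 * ‖x - x₀‖ ^ 2) • (x - x₀))) x := by
  have e : (fun x : Eucl d => ‖x - x₀‖ ^ 4) = fun x => (‖x - x₀‖ ^ 2) ^ 2 := by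
    funext x; ring
  rw [e]
  have h0 : HasFDerivAt (fun z : Eucl d => z - x₀) (ContinuousLinearMap.id ℝ _) x :=
    (hasFDerivAt_id x).sub_const x₀
  refine (h0.norm_sq.pow 2).congr_fderiv ?_
  ext v
  simp
  ring

lemma gradAt_quartic (x₀ : Eucl d) : gradAt (fun x : Eucl d => ‖x - x₀‖ ^ 4) x₀ = 0 :=
  gradAt_eq (by simpa using quartic_hasFDerivAt x₀ x₀)

lemma hessAt_quartic (x₀ : Eucl d) : hessAt (fun x : Eucl d => ‖x - x₀‖ ^ 4) x₀ = 0 := by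
  ext i j
  simp only [hessAt, Matrix.of_apply, Matrix.zero_apply]
  have e : (fun y => fderiv ℝ (fun x : Eucl d => ‖x - x₀‖ ^ 4) y (EuclideanSpace.single j 1))
      = fun y => ‖y - x₀‖ ^ 2 * (4 * ⟪y - x₀, EuclideanSpace.single j 1⟫) := by
    funext y
    rw [(quartic_hasFDerivAt x₀ y).fderiv]
    simp only [innerSL_apply_apply, real_inner_smul_left]
    ring
  rw [e]
  have h0 : HasFDerivAt (fun z : Eucl d => z - x₀) (ContinuousLinearMap.id ℝ _) x₀ :=
    (hasFDerivAt_id x₀).sub_const x₀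
  have h1 := (h0.inner ℝ (hasFDerivAt_const
    (EuclideanSpace.single j (1:ℝ) : Eucl d) x₀)).const_mul (4:ℝ)
  have h2 := (h0.norm_sq.mul h1).fderiv
  rw [Pi.mul_def] at h2
  rw [h2]
  simp

end Hessian

/-! ### Standing hypotheses and their symmetry -/

section Standing

variable {d : ℕ}

/-- The properties of the operator used in the argument. The structure condition enters only
through `mono`, the lower bound for ordered values of the unknown, which is the part invariant
under the symmetry `negOp`. -/
structure Hyp (Ω : Set (Eucl d)) (F : Matrix (Fin d) (Fin d) ℝ → Eucl d → ℝ → Eucl d → ℝ → ℝ)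
    (lam Lam gam C₀ K : ℝ) (σ₁ σ₂ : ℝ → ℝ) : Prop where
  isOpen : IsOpen Ω
  bounded : Bornology.IsBounded Ω
  lam_pos : 0 < lam
  lam_le : lam ≤ Lam
  gam_nonneg : 0 ≤ gam
  C_nonneg : 0 ≤ C₀
  K_nonneg : 0 ≤ K
  mono : ∀ M N : Matrix (Fin d) (Fin d) ℝ, M.IsSymm → N.IsSymm → ∀ (P Q : Eucl d) (r s : ℝ),
    s ≤ r → ∀ x ∈ closure Ω, ∀ t ∈ Ici (0:ℝ),
      pucciMinus lam Lam (M - N) - gam * ‖P - Q‖ ≤ F M P r x t - F N Q s x t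
  modulus₁ : IsModulus σ₁
  modulus₂ : IsModulus σ₂
  joint : ∀ (M : Matrix (Fin d) (Fin d) ℝ) (P : Eucl d) (r : ℝ),
      ∀ x ∈ closure Ω, ∀ y ∈ closure Ω, ∀ t ∈ Ici (0:ℝ), ∀ s ∈ Ici (0:ℝ),
        |F M P r x t - F M P r y s| ≤ σ₁ ‖x - y‖ + σ₂ |t - s|
  lin : ∀ h ∈ Ioc (0:ℝ) 1, σ₂ h ≤ C₀ * h
  bound : ∀ x ∈ closure Ω, ∀ t ∈ Ici (0:ℝ), |F 0 0 0 x t| ≤ K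
  cont : ContinuousOn
      (fun q : Matrix (Fin d) (Fin d) ℝ × Eucl d × ℝ × Eucl d × ℝ =>
        F q.1 q.2.1 q.2.2.1 q.2.2.2.1 q.2.2.2.2)
      (univ ×ˢ univ ×ˢ univ ×ˢ closure Ω ×ˢ Ici 0)

/-- The operator satisfied by `-u` when `u` solves the equation for `F`. -/
def negOp (F : Matrix (Fin d) (Fin d) ℝ → Eucl d → ℝ → Eucl d → ℝ → ℝ) :
    Matrix (Fin d) (Fin d) ℝ → Eucl d → ℝ → Eucl d → ℝ → ℝ :=
  fun M P r x t => -F (-M) (-P) (-r) x t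

variable {Ω : Set (Eucl d)} {F : Matrix (Fin d) (Fin d) ℝ → Eucl d → ℝ → Eucl d → ℝ → ℝ}
  {lam Lam gam C₀ K : ℝ} {σ₁ σ₂ : ℝ → ℝ}

lemma Hyp.neg (H : Hyp Ω F lam Lam gam C₀ K σ₁ σ₂) :
    Hyp Ω (negOp F) lam Lam gam C₀ K σ₁ σ₂ where
  isOpen := H.isOpen
  bounded := H.bounded
  lam_pos := H.lam_pos
  lam_le := H.lam_le
  gam_nonneg := H.gam_nonneg
  C_nonneg := H.C_nonneg
  K_nonneg := H.K_nonneg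
  mono := fun M N hM hN P Q r s hrs x hx t ht => by
    have := H.mono (-N) (-M) hN.neg hM.neg (-Q) (-P) (-s) (-r) (by linarith) x hx t ht
    rw [show -N - -M = M - N by abel, show -Q - -P = P - Q by abel] at this
    simp only [negOp]
    linarith
  modulus₁ := H.modulus₁
  modulus₂ := H.modulus₂
  joint := fun M P r x hx y hy t ht s hs => by
    have := H.joint (-M) (-P) (-r) x hx y hy t ht s hs
    simp only [negOp]
    rwa [neg_sub_neg, abs_sub_comm]
  lin := H.lin
  bound := fun x hx t ht => by
    have := H.bound x hx t ht
    simpa [negOp] using this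
  cont := by
    have hc : Continuous (fun q : Matrix (Fin d) (Fin d) ℝ × Eucl d × ℝ × Eucl d × ℝ =>
        (-q.1, -q.2.1, -q.2.2.1, q.2.2.2.1, q.2.2.2.2)) := by fun_prop
    exact (H.cont.comp hc.continuousOn (fun q hq => by simpa using hq)).neg

lemma ViscSubsol.neg {G : Matrix (Fin d) (Fin d) ℝ → Eucl d → ℝ → Eucl d → ℝ} {g u : Eucl d → ℝ}
    (h : ViscSubsol Ω G g u) :
    ViscSupersol Ω (fun M P r x => -G (-M) (-P) (-r) x) (fun x => -g x) (fun x => -u x) := by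
  intro x₀ hx φ hφ hloc
  have := h x₀ hx (fun x => -φ x) hφ.neg (hloc.neg.congr (Eventually.of_forall fun x => by
    simp only; ring))
  rw [gradAt_neg, hessAt_neg] at this
  simp only [neg_neg]
  linarith

lemma ViscSupersol.neg {G : Matrix (Fin d) (Fin d) ℝ → Eucl d → ℝ → Eucl d → ℝ}
    {g u : Eucl d → ℝ} (h : ViscSupersol Ω G g u) :
    ViscSubsol Ω (fun M P r x => -G (-M) (-P) (-r) x) (fun x => -g x) (fun x => -u x) := by
  intro x₀ hx φ hφ hloc
  have := h x₀ hx (fun x => -φ x) hφ.neg (hloc.neg.congr (Eventually.of_forall fun x => by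
    simp only; ring))
  rw [gradAt_neg, hessAt_neg] at this
  simp only [neg_neg]
  linarith

lemma RotheStep.neg {h : ℝ} {m : ℕ} {z z' : Eucl d → ℝ} (hz : RotheStep Ω F h m z z') :
    RotheStep Ω (negOp F) h m (fun x => -z x) (fun x => -z' x) := by
  obtain ⟨h1, ⟨h2, h3⟩, h4⟩ := hz
  refine ⟨h1.neg, ⟨?_, ?_⟩, fun x hx => by simp only [h4 x hx, neg_zero]⟩
  · have := h3.neg
    convert this using 1
    · funext M P r x; simp only [negOp]; ring
    · funext x; ring
  · have := h2.neg
    convert this using 1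
    · funext M P r x; simp only [negOp]; ring
    · funext x; ring

lemma Hyp.of_structure {ω : ℝ → ℝ → ℝ} (hlam : 0 < lam) (hlL : lam ≤ Lam) (hgam : 0 ≤ gam)
    (hC₀ : 0 ≤ C₀) (hK : 0 ≤ K) (hΩopen : IsOpen Ω) (hΩbdd : Bornology.IsBounded Ω)
    (hFcont : ContinuousOn
      (fun q : Matrix (Fin d) (Fin d) ℝ × Eucl d × ℝ × Eucl d × ℝ =>
        F q.1 q.2.1 q.2.2.1 q.2.2.2.1 q.2.2.2.2)
      (univ ×ˢ univ ×ˢ univ ×ˢ closure Ω ×ˢ Ici 0))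
    (hStruct : StructureCondition lam Lam gam ω (closure Ω) (Ici 0) F)
    (hσ₁ : IsModulus σ₁) (hσ₂ : IsModulus σ₂)
    (hjoint : ∀ (M : Matrix (Fin d) (Fin d) ℝ) (P : Eucl d) (r : ℝ),
      ∀ x ∈ closure Ω, ∀ y ∈ closure Ω, ∀ t ∈ Ici (0:ℝ), ∀ s ∈ Ici (0:ℝ),
        |F M P r x t - F M P r y s| ≤ σ₁ ‖x - y‖ + σ₂ |t - s|)
    (hσ₂lin : ∀ h ∈ Ioc (0:ℝ) 1, σ₂ h ≤ C₀ * h)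
    (hFK : ∀ x ∈ closure Ω, ∀ t ∈ Ici (0:ℝ), |F 0 0 0 x t| ≤ K) :
    Hyp Ω F lam Lam gam C₀ K σ₁ σ₂ where
  isOpen := hΩopen
  bounded := hΩbdd
  lam_pos := hlam
  lam_le := hlL
  gam_nonneg := hgam
  C_nonneg := hC₀
  K_nonneg := hK
  mono := fun M N hM hN P Q r s hrs x hx t ht => by
    have hR : 0 < |r| + |s| + 1 := by positivity
    have h1 := (hStruct.2 _ hR M N hM hN P Q r s (by linarith [abs_nonneg s])
      (by linarith [abs_nonneg r]) x hx t ht).1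
    rw [max_eq_right (by linarith), (hStruct.1 _ hR).2.2] at h1
    linarith
  modulus₁ := hσ₁
  modulus₂ := hσ₂
  joint := hjoint
  lin := hσ₂lin
  bound := hFK
  cont := hFcont

lemma IsModulus.nonneg {σ : ℝ → ℝ} (h : IsModulus σ) {r : ℝ} (hr : 0 ≤ r) : 0 ≤ σ r := by
  have := h.1 hr
  rwa [h.2.2] at this

/-- Operators at two times, one of them translated by `e`, form a pair to which the comparison
principle applies. -/
lemma Hyp.compStruct (H : Hyp Ω F lam Lam gam C₀ K σ₁ σ₂) {Ω' : Set (Eucl d)} {e : Eucl d}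
    (h1 : Ω' ⊆ closure Ω) (h2 : ∀ x ∈ Ω', x + e ∈ closure Ω) {t₁ t₂ : ℝ} (ht₁ : 0 ≤ t₁)
    (ht₂ : 0 ≤ t₂) :
    CompStruct Ω' (fun M P r x => F M P r (x + e) t₁) (fun M P r x => F M P r x t₂)
      (Lam * d) gam (σ₁ ‖e‖ + σ₂ |t₁ - t₂|) σ₁ := by
  intro M N P Q r s c x hx y hy hM hN hc hq hsr
  have e1 := pucciMinus_ge' H.lam_pos H.lam_le hc (hM.sub hN) hq
  have e2 := H.mono M N hM hN P Q r s hsr y (h1 hy) t₂ ht₂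
  have e3 := (abs_le.mp (H.joint M P r x (h1 hx) y (h1 hy) t₂ ht₂ t₂ ht₂)).1
  have e4 := (abs_le.mp (H.joint M P r (x + e) (h2 x hx) x (h1 hx) t₁ ht₁ t₂ ht₂)).1
  rw [sub_self, abs_zero, H.modulus₂.2.2] at e3
  rw [add_sub_cancel_left] at e4
  simp only
  linarith

/-- A smooth function that is a strict supersolution wherever it is exceeded bounds a
subsolution from above. -/
lemma Hyp.sub_le_smooth (H : Hyp Ω F lam Lam gam C₀ K σ₁ σ₂) {h t : ℝ} (ht : 0 ≤ t)
    {u f ψ : Eucl d → ℝ} (hu : ContinuousOn u (closure Ω)) (hψ : ContDiff ℝ 2 ψ)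
    (hψ0 : ∀ x ∈ closure Ω, 0 ≤ ψ x) (hfr : ∀ x ∈ frontier Ω, u x ≤ ψ x)
    (hsub : ViscSubsol Ω (fun M P r x => F M P r x t + r / h) f u)
    (hstr : ∀ x ∈ Ω, ψ x < u x →
      f x - u x / h + K < pucciMinus lam Lam (hessAt ψ x) - gam * ‖gradAt ψ x‖) :
    ∀ x ∈ closure Ω, u x ≤ ψ x := by
  by_contra! hcon
  obtain ⟨x₁, hx₁, hlt⟩ := hcon
  obtain ⟨x₀, hx₀, hmax⟩ := H.bounded.isCompact_closure.exists_isMaxOn ⟨x₁, hx₁⟩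
    (hu.sub hψ.continuous.continuousOn)
  have hpos : ψ x₀ < u x₀ := by
    have : u x₁ - ψ x₁ ≤ u x₀ - ψ x₀ := hmax hx₁
    linarith
  have hxO : x₀ ∈ Ω := by
    by_contra hxO
    have : x₀ ∈ frontier Ω := by
      rw [frontier, H.isOpen.interior_eq]; exact ⟨hx₀, hxO⟩
    linarith [hfr x₀ this]
  have e1 := hsub x₀ hxO ψ hψ.contDiffAt (by
    filter_upwards [H.isOpen.mem_nhds hxO] with x hx
    exact hmax (subset_closure hx))
  have e2 := H.mono (hessAt ψ x₀) 0 (hessAt_isSymm hψ x₀) (Matrix.isSymm_zero) (gradAt ψ x₀) 0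
    (u x₀) 0 ((hψ0 x₀ hx₀).trans hpos.le) x₀ hx₀ t ht
  have e3 := (abs_le.mp (H.bound x₀ hx₀ t ht)).1
  have e4 := hstr x₀ hxO hpos
  rw [sub_zero, sub_zero] at e2
  simp only at e1
  linarith

end Standing

/-! ### Boundary barrier -/

section Barrier

variable {d : ℕ} {Ω : Set (Eucl d)}

lemma trace_hess_exp_term (p : Eucl d) (M : Matrix (Fin d) (Fin d) ℝ) (a b : ℝ) :
    (Matrix.of fun i j => a * (M i j + b * (p i * p j)) : Matrix (Fin d) (Fin d) ℝ).trace
      = a * (M.trace + b * ‖p‖ ^ 2) := by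
  simp only [Matrix.trace, Matrix.diag_apply, Matrix.of_apply, EuclideanSpace.norm_sq_eq,
    Real.norm_eq_abs, sq_abs]
  rw [← Finset.mul_sum, Finset.sum_add_distrib, ← Finset.mul_sum]
  simp only [sq]

lemma quadForm_hess_exp_term (p v : Eucl d) (M : Matrix (Fin d) (Fin d) ℝ) (a b : ℝ) :
    quadForm (Matrix.of fun i j => a * (M i j + b * (p i * p j))) v
      = a * (quadForm M v + b * ⟪p, v⟫ ^ 2) := by
  have : ⟪p, v⟫ = ∑ i, p i * v i := by
    rw [PiLp.inner_apply]
    refine Finset.sum_congr rfl fun i _ => ?_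
    simp [mul_comm]
  rw [this, sq, Finset.sum_mul_sum]
  simp only [quadForm, Matrix.of_apply, Finset.mul_sum, ← Finset.sum_add_distrib]
  refine Finset.sum_congr rfl fun i _ => Finset.sum_congr rfl fun j _ => ?_
  ring

lemma fderiv_exp_barrier {f : Eucl d → ℝ} (hf : ContDiff ℝ 2 f) (A μ : ℝ) (x : Eucl d) :
    fderiv ℝ (fun x => A * (1 - Real.exp (μ * f x))) x
      = (-(A * μ * Real.exp (μ * f x))) • fderiv ℝ f x := by
  have h1 := (hf.differentiable (by norm_num) x).hasFDerivAt
  have h2 := (((h1.const_mul μ).exp).const_sub 1).const_mul A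
  rw [h2.fderiv]
  ext v
  simp
  ring

lemma gradAt_exp_barrier {f : Eucl d → ℝ} (hf : ContDiff ℝ 2 f) (A μ : ℝ) (x : Eucl d) :
    gradAt (fun x => A * (1 - Real.exp (μ * f x))) x
      = (-(A * μ * Real.exp (μ * f x))) • gradAt f x := by
  ext i
  rw [gradAt_apply, fderiv_exp_barrier hf]
  rfl

lemma hessAt_exp_barrier {f : Eucl d → ℝ} (hf : ContDiff ℝ 2 f) (A μ : ℝ) (x : Eucl d) :
    hessAt (fun x => A * (1 - Real.exp (μ * f x))) x
      = Matrix.of fun i j => -(A * μ * Real.exp (μ * f x)) *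
          (hessAt f x i j + μ * (gradAt f x i * gradAt f x j)) := by
  ext i j
  simp only [hessAt, Matrix.of_apply, fderiv_exp_barrier hf, gradAt_apply]
  have h1 := (hf.differentiable (by norm_num) x).hasFDerivAt
  have h2 := (((h1.const_mul μ).exp).const_mul (A * μ)).neg
  have h3 : DifferentiableAt ℝ (fun y => fderiv ℝ f y (EuclideanSpace.single j 1)) x :=
    (differentiable_fderiv hf x).clm_apply (differentiableAt_const _)
  have h4 := (h2.mul h3.hasFDerivAt).fderiv
  have e : (fun y => ((-(A * μ * Real.exp (μ * f y))) • fderiv ℝ f y)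
        (EuclideanSpace.single j 1))
      = (-fun y => A * μ * Real.exp (μ * f y)) *
        fun y => fderiv ℝ f y (EuclideanSpace.single j 1) := by
    funext y
    simp
  rw [e, h4]
  simp
  ring

/-- Near the boundary the defining function has gradient bounded away from zero. -/
lemma exists_strip (hO : IsOpen Ω) (hbd : Bornology.IsBounded Ω) {f : Eucl d → ℝ}
    (hf : ContDiff ℝ 2 f) (hΩ : Ω = {x | f x < 0}) (hne : ∀ x ∈ frontier Ω, fderiv ℝ f x ≠ 0) :
    ∃ c > 0, ∀ x ∈ closure Ω, -c < f x → c ≤ ‖gradAt f x‖ := by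
  have hK := hbd.isCompact_closure
  rcases (closure Ω).eq_empty_or_nonempty with he | hn
  · exact ⟨1, one_pos, fun x hx => by simp [he] at hx⟩
  have hcont : Continuous (fun x => max (-f x) ‖gradAt f x‖) :=
    hf.continuous.neg.max (continuous_gradAt hf).norm
  obtain ⟨x₀, hx₀, hmin⟩ := hK.exists_isMinOn hn hcont.continuousOn
  refine ⟨max (-f x₀) ‖gradAt f x₀‖, ?_, fun x hx hlt => ?_⟩
  · by_cases hxO : x₀ ∈ Ω
    · have : f x₀ < 0 := by rw [hΩ] at hxO; exact hxO
      exact lt_max_of_lt_left (by linarith)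
    · have hfr : x₀ ∈ frontier Ω := by
        rw [frontier, hO.interior_eq]; exact ⟨hx₀, hxO⟩
      refine lt_max_of_lt_right (norm_pos_iff.mpr fun h0 => hne x₀ hfr ?_)
      ext v
      rw [← inner_gradAt, h0, inner_zero_left]; rfl
  · have h1 : max (-f x₀) ‖gradAt f x₀‖ ≤ max (-f x) ‖gradAt f x‖ := hmin hx
    rcases le_max_iff.mp h1 with h | h
    · linarith
    · exact h

/-- A smooth barrier: nonnegative, zero on the boundary, and with arbitrarily large value of the
extremal operator at every point where it does not exceed a prescribed bound. It has the form
`A (1 - exp (μ f))` with `f` the defining function. -/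
lemma exists_barrier (hO : IsOpen Ω) (hbd : Bornology.IsBounded Ω) (hsm : HasSmoothBoundary Ω)
    {lam Lam gam : ℝ} (hlam : 0 < lam) (hlL : lam ≤ Lam) (hgam : 0 ≤ gam) (L B : ℝ) :
    ∃ ψ : Eucl d → ℝ, ContDiff ℝ 2 ψ ∧ (∀ x ∈ closure Ω, 0 ≤ ψ x) ∧
      (∀ x ∈ frontier Ω, ψ x = 0) ∧
      ∀ x ∈ Ω, ψ x < B → L < pucciMinus lam Lam (hessAt ψ x) - gam * ‖gradAt ψ x‖ := by
  obtain ⟨f, hf', hΩ, hne⟩ := hsm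
  have hf : ContDiff ℝ 2 f := contDiff_infty.mp hf' 2
  have hK := hbd.isCompact_closure
  obtain ⟨c, hc, hstrip⟩ := exists_strip hO hbd hf hΩ hne
  obtain ⟨G, hG⟩ := hK.exists_bound_of_continuousOn (continuous_gradAt hf).continuousOn
  have h1 : Continuous (fderiv ℝ (fderiv ℝ f)) :=
    (hf.fderiv_right (m := 1) (by norm_num)).continuous_fderiv (by norm_num)
  obtain ⟨H₀, hH₀⟩ := hK.exists_bound_of_continuousOn (f := fderiv ℝ (fderiv ℝ f)) h1.continuousOn
  set H := max H₀ 0 with hHd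
  have hH0 : 0 ≤ H := le_max_right _ _
  have hLam : 0 < Lam := hlam.trans_le hlL
  obtain ⟨μ, hμ, hμ1⟩ : ∃ μ > 0, 1 ≤ lam * μ * c ^ 2 - Lam * (d * H) - gam * G := by
    refine ⟨(1 + |Lam * (d * H) + gam * G|) / (lam * c ^ 2), by positivity, ?_⟩
    have : lam * ((1 + |Lam * (d * H) + gam * G|) / (lam * c ^ 2)) * c ^ 2
        = 1 + |Lam * (d * H) + gam * G| := by field_simp
    rw [this]
    linarith [le_abs_self (Lam * (d * H) + gam * G)]
  set E := Real.exp (-(μ * c)) with hE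
  have hE0 : 0 < E := Real.exp_pos _
  have hE1 : E < 1 := Real.exp_lt_one_iff.mpr (by simp; positivity)
  have hE1' : 0 < 1 - E := by linarith
  obtain ⟨A, hA, hA1, hA2⟩ : ∃ A > 0, L < A * μ * E ∧ B ≤ A * (1 - E) := by
    refine ⟨(|L| + 1) / (μ * E) + |B| / (1 - E), by positivity, ?_, ?_⟩
    · have : ((|L| + 1) / (μ * E) + |B| / (1 - E)) * μ * E
          = |L| + 1 + |B| / (1 - E) * μ * E := by field_simp
      rw [this]
      have : 0 ≤ |B| / (1 - E) * μ * E := by positivity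
      linarith [le_abs_self L]
    · have : ((|L| + 1) / (μ * E) + |B| / (1 - E)) * (1 - E)
          = (|L| + 1) / (μ * E) * (1 - E) + |B| := by field_simp
      rw [this]
      have : 0 ≤ (|L| + 1) / (μ * E) * (1 - E) := by positivity
      linarith [le_abs_self B]
  have hfle : ∀ x ∈ closure Ω, f x ≤ 0 := by
    intro x hx
    have : closure Ω ⊆ {x | f x ≤ 0} :=
      closure_minimal (by rw [hΩ]; intro y (hy : f y < 0); exact hy.le)
        (isClosed_le hf.continuous continuous_const)
    exact this hx
  have hψ : ContDiff ℝ 2 (fun x => A * (1 - Real.exp (μ * f x))) :=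
    contDiff_const.mul (contDiff_const.sub (contDiff_const.mul hf).exp)
  refine ⟨fun x => A * (1 - Real.exp (μ * f x)), hψ, ?_, ?_, ?_⟩
  · intro x hx
    have h2 : Real.exp (μ * f x) ≤ 1 :=
      Real.exp_le_one_iff.mpr (mul_nonpos_of_nonneg_of_nonpos hμ.le (hfle x hx))
    exact mul_nonneg hA.le (by linarith)
  · intro x hx
    have h2 : f x = 0 := by
      refine le_antisymm (hfle x hx.1) ?_
      have : x ∉ Ω := by
        have := hx.2
        rwa [hO.interior_eq] at this
      rw [hΩ] at this
      exact not_lt.mp this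
    simp [h2]
  · intro x hx hlt
    have hxK := subset_closure hx
    set a := A * μ * Real.exp (μ * f x) with ha
    have hfc : -c < f x := by
      by_contra! hcon
      have : Real.exp (μ * f x) ≤ E := Real.exp_le_exp.mpr (by nlinarith)
      have : A * (1 - E) ≤ A * (1 - Real.exp (μ * f x)) := by gcongr
      simp only at hlt
      linarith
    have haE : A * μ * E ≤ a := by
      have : E ≤ Real.exp (μ * f x) := Real.exp_le_exp.mpr (by nlinarith)
      rw [ha]; gcongr
    have ha0 : 0 ≤ a := by positivity
    have hgr := hstrip x hxK hfc
    have hq : ∀ v : Eucl d, |quadForm (hessAt f x) v| ≤ H * ‖v‖ ^ 2 := by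
      intro v
      rw [quadForm_hessAt hf]
      have h2 := (fderiv ℝ (fderiv ℝ f) x).le_opNorm v
      have h3 := (fderiv ℝ (fderiv ℝ f) x v).le_opNorm v
      have h4 : ‖fderiv ℝ (fderiv ℝ f) x‖ ≤ H := (hH₀ x hxK).trans (le_max_left _ _)
      rw [Real.norm_eq_abs] at h3
      calc _ ≤ ‖fderiv ℝ (fderiv ℝ f) x v‖ * ‖v‖ := h3
        _ ≤ (‖fderiv ℝ (fderiv ℝ f) x‖ * ‖v‖) * ‖v‖ := by gcongr
        _ ≤ (H * ‖v‖) * ‖v‖ := by gcongr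
        _ = _ := by ring
    have htr : -(d * H) ≤ (hessAt f x).trace := by
      have : (-(hessAt f x)).trace ≤ d * H := trace_le fun v => by
        have := (abs_le.mp (hq v)).1
        rw [← zero_sub, quadForm_sub]
        have h0 : quadForm (0 : Matrix (Fin d) (Fin d) ℝ) v = 0 := by simp [quadForm]
        rw [h0]; linarith
      rw [Matrix.trace_neg] at this
      linarith
    have key := pucciMinus_ge (lam := lam) (c := a * H) hlL (by positivity)
      (hessAt_isSymm hψ x) (fun v => by
        rw [hessAt_exp_barrier hf, quadForm_hess_exp_term]
        have := (abs_le.mp (hq v)).1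
        have h2 : 0 ≤ μ * ⟪gradAt f x, v⟫ ^ 2 := by positivity
        have h3 : a * (-(H * ‖v‖ ^ 2)) ≤
          a * (quadForm (hessAt f x) v + μ * ⟪gradAt f x, v⟫ ^ 2) := by gcongr; linarith
        rw [← ha]
        linarith)
    have htr2 : a * (μ * c ^ 2 - d * H) ≤ a * ((hessAt f x).trace + μ * ‖gradAt f x‖ ^ 2) := by
      have : μ * c ^ 2 ≤ μ * ‖gradAt f x‖ ^ 2 := by gcongr
      gcongr
      linarith
    have htr3 := mul_le_mul_of_nonneg_left htr2 hlam.le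
    have hgr2 : gam * ‖gradAt (fun x => A * (1 - Real.exp (μ * f x))) x‖ ≤ gam * (a * G) := by
      rw [gradAt_exp_barrier hf, norm_smul, norm_neg, Real.norm_eq_abs, ← ha, abs_of_nonneg ha0]
      have := hG x hxK
      gcongr
    rw [hessAt_exp_barrier hf, trace_hess_exp_term, ← hessAt_exp_barrier hf, ← ha] at key
    have hfin : a * 1 ≤ a * (lam * μ * c ^ 2 - Lam * (d * H) - gam * G) := by gcongr
    linarith

end Barrier

/-! ### Uniform estimates for the Rothe approximations -/

section Rothe

variable {d : ℕ}

/-- `z` is the Rothe sequence of step `h`, started from zero. -/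
def IsRothe (Ω : Set (Eucl d)) (F : Matrix (Fin d) (Fin d) ℝ → Eucl d → ℝ → Eucl d → ℝ → ℝ)
    (h : ℝ) (z : ℕ → Eucl d → ℝ) : Prop :=
  (∀ x, z 0 x = 0) ∧ ∀ m : ℕ, RotheStep Ω F h m (z m) (z (m + 1))

variable {Ω : Set (Eucl d)} {F : Matrix (Fin d) (Fin d) ℝ → Eucl d → ℝ → Eucl d → ℝ → ℝ}
  {lam Lam gam C₀ K : ℝ} {σ₁ σ₂ : ℝ → ℝ} {h : ℝ} {z : ℕ → Eucl d → ℝ}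

lemma IsRothe.neg (hz : IsRothe Ω F h z) : IsRothe Ω (negOp F) h (fun m x => -z m x) :=
  ⟨fun x => by simp only [hz.1 x, neg_zero], fun m => (hz.2 m).neg⟩

lemma IsRothe.continuousOn (hz : IsRothe Ω F h z) (m : ℕ) :
    ContinuousOn (z m) (closure Ω) := by
  cases m with
  | zero => rw [show z 0 = fun _ => 0 from funext hz.1]; exact continuousOn_const
  | succ m => exact (hz.2 m).1

lemma IsRothe.frontier_eq (hz : IsRothe Ω F h z) (m : ℕ) {x : Eucl d} (hx : x ∈ frontier Ω) :
    z m x = 0 := by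
  cases m with
  | zero => exact hz.1 x
  | succ m => exact (hz.2 m).2.2 x hx

/-- The first step is bounded by `K h`, by comparison with a constant. -/
lemma Hyp.first_step_le (H : Hyp Ω F lam Lam gam C₀ K σ₁ σ₂) (hh : 0 < h)
    (hz : IsRothe Ω F h z) : ∀ x ∈ closure Ω, z 1 x ≤ K * h := by
  have hst := hz.2 0
  have hKh : 0 ≤ K * h := mul_nonneg H.K_nonneg hh.le
  refine H.sub_le_smooth (t := ((0 : ℕ) + 1) * h) (by simpa using hh.le) hst.1 contDiff_const
    (fun _ _ => hKh) (fun x hx => by rw [hst.2.2 x hx]; exact hKh) hst.2.1.1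
    (fun x _ hlt => ?_)
  rw [hessAt_const, gradAt_const, pucciMinus_zero, norm_zero, hz.1 x, zero_div]
  have : K < z 1 x / h := by rwa [lt_div_iff₀ hh]
  linarith

/-- Increments of the Rothe sequence are of size `h`, by comparing consecutive steps. -/
lemma Hyp.increment_le (H : Hyp Ω F lam Lam gam C₀ K σ₁ σ₂) (hh : h ∈ Ioc (0:ℝ) 1)
    (hz : IsRothe Ω F h z) (m : ℕ) :
    ∀ x ∈ closure Ω, |z (m + 1) x - z m x| ≤ (K + C₀ * (m * h)) * h := by
  have hh0 := hh.1
  induction m with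
  | zero =>
    intro x hx
    have h1 := H.first_step_le hh0 hz x hx
    have h2 := H.neg.first_step_le hh0 hz.neg x hx
    rw [hz.1 x, abs_le]
    simp only [zero_add, Nat.cast_zero, zero_mul, mul_zero, add_zero, sub_zero]
    constructor <;> linarith
  | succ m ih =>
    have hb : 0 ≤ (K + C₀ * ((m + 1 : ℕ) * h)) * h := by
      have := H.C_nonneg
      have := H.K_nonneg
      positivity
    have hσ : σ₂ h ≤ C₀ * h := H.lin h hh
    have hA : 0 ≤ Lam * d := by
      have := H.lam_pos.trans_le H.lam_le
      positivity
    have ht : ∀ k : ℕ, (0:ℝ) ≤ (k + 1) * h := fun k => by positivity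
    have hcs := fun t₁ t₂ (h1 : (0:ℝ) ≤ t₁) (h2 : (0:ℝ) ≤ t₂) =>
      H.compStruct (Ω' := Ω) (e := 0) subset_closure
        (fun x hx => by rw [add_zero]; exact subset_closure hx) h1 h2
    simp only [add_zero, norm_zero, H.modulus₁.2.2, zero_add] at hcs
    have habs : |((m + 1 : ℕ) + 1) * h - (m + 1) * h| = h := by
      push_cast
      rw [show ((m:ℝ) + 1 + 1) * h - (m + 1) * h = h by ring, abs_of_pos hh0]
    have hrhs : ((K + C₀ * ((m + 1 : ℕ) * h)) * h) / h = K + C₀ * (m * h) + C₀ * h := by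
      push_cast; field_simp; ring
    have c1 := hcs _ _ (ht (m + 1)) (ht m)
    have c2 := hcs _ _ (ht m) (ht (m + 1))
    rw [habs] at c1
    rw [abs_sub_comm, habs] at c2
    have hi : ∀ x ∈ closure Ω, |z (m + 1) x / h - z m x / h| ≤ K + C₀ * (m * h) := by
      intro x hx
      rw [← sub_div, abs_div, abs_of_pos hh0, div_le_iff₀ hh0]
      exact ih x hx
    have r1 := comparison H.isOpen H.bounded hA H.gam_nonneg hh0 hb H.modulus₁ c1
      (hz.continuousOn (m + 2)) (hz.continuousOn (m + 1))
      ((hz.continuousOn m).div_const h)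
      (fun x hx => by
        rw [hrhs]
        have := (abs_le.mp (hi x (subset_closure hx))).2
        linarith)
      (fun x hx => by
        rw [hz.frontier_eq _ hx, hz.frontier_eq _ hx, sub_zero]; exact hb)
      (hz.2 (m + 1)).2.1.1 (hz.2 m).2.1.2
    have r2 := comparison H.isOpen H.bounded hA H.gam_nonneg hh0 hb H.modulus₁ c2
      (hz.continuousOn (m + 1)) (hz.continuousOn (m + 2))
      ((hz.continuousOn (m + 1)).div_const h)
      (fun x hx => by
        rw [hrhs]
        have := (abs_le.mp (hi x (subset_closure hx))).1
        linarith)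
      (fun x hx => by
        rw [hz.frontier_eq _ hx, hz.frontier_eq _ hx, sub_zero]; exact hb)
      (hz.2 m).2.1.1 (hz.2 (m + 1)).2.1.2
    intro x hx
    rw [abs_le]
    have := r1 x hx
    have := r2 x hx
    constructor <;> linarith

/-- Lipschitz bound in discrete time up to the final time `T`. -/
lemma Hyp.time_lipschitz (H : Hyp Ω F lam Lam gam C₀ K σ₁ σ₂) (hh : h ∈ Ioc (0:ℝ) 1)
    (hz : IsRothe Ω F h z) {T : ℝ} {x : Eucl d} (hx : x ∈ closure Ω) (m k : ℕ)
    (hT : (m + k : ℕ) * h ≤ T) :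
    |z (m + k) x - z m x| ≤ (K + C₀ * T) * (k * h) := by
  have hh0 := hh.1
  induction k with
  | zero => simp
  | succ k ih =>
    have hTk : ((m + k : ℕ) : ℝ) * h ≤ T := by
      push_cast at hT ⊢
      nlinarith
    have h1 := ih hTk
    have h2 := H.increment_le hh hz (m + k) x hx
    have h3 : (K + C₀ * ((m + k : ℕ) * h)) * h ≤ (K + C₀ * T) * h := by
      have := H.C_nonneg
      gcongr
    have h4 := abs_sub_le (z (m + (k + 1)) x) (z (m + k) x) (z m x)
    have h5 : m + (k + 1) = m + k + 1 := rfl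
    rw [h5] at h4 ⊢
    push_cast
    linarith

/-- Uniform boundary control of all Rothe approximations by one barrier. -/
lemma Hyp.exists_barrier_bound (H : Hyp Ω F lam Lam gam C₀ K σ₁ σ₂) (hsm : HasSmoothBoundary Ω)
    {T : ℝ} (hT : 0 < T) :
    ∃ ψ : Eucl d → ℝ, Continuous ψ ∧ (∀ x ∈ closure Ω, 0 ≤ ψ x) ∧ (∀ x ∈ frontier Ω, ψ x = 0) ∧
      ∀ F', Hyp Ω F' lam Lam gam C₀ K σ₁ σ₂ → ∀ h ∈ Ioc (0:ℝ) 1, ∀ z, IsRothe Ω F' h z →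
        ∀ m : ℕ, m * h ≤ T → ∀ x ∈ closure Ω, z m x ≤ ψ x := by
  set C := K + C₀ * T with hC
  have hC0 : 0 ≤ C := by
    have := H.C_nonneg
    have := H.K_nonneg
    positivity
  obtain ⟨ψ, h1, h2, h3, h4⟩ := exists_barrier H.isOpen H.bounded hsm H.lam_pos H.lam_le
    H.gam_nonneg (C + K) (C * T)
  refine ⟨ψ, h1.continuous, h2, h3, fun F' H' h hh z hz m hm => ?_⟩
  have hh0 := hh.1
  cases m with
  | zero => intro x hx; rw [hz.1 x]; exact h2 x hx
  | succ m =>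
    refine H'.sub_le_smooth (t := (m + 1) * h) (by positivity) (hz.2 m).1 h1 h2
      (fun x hx => by rw [(hz.2 m).2.2 x hx, h3 x hx]) (hz.2 m).2.1.1 (fun x hx hlt => ?_)
    have hxK := subset_closure hx
    have e1 := (abs_le.mp (H'.time_lipschitz hh hz hxK m 1 hm)).1
    have e2 := (abs_le.mp (H'.time_lipschitz (T := T) hh hz hxK 0 (m + 1) (by rwa [zero_add]))).2
    rw [hz.1 x, zero_add, sub_zero] at e2
    have e3 : C * ((m + 1 : ℕ) * h) ≤ C * T := by gcongr
    have e4 := h4 x hx (by linarith)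
    have e5 : z m x / h - z (m + 1) x / h ≤ C := by
      rw [← sub_div, div_le_iff₀ hh0]
      simp only [Nat.cast_one, one_mul] at e1
      linarith
    linarith

lemma ViscSubsol.translate {h t : ℝ} {f u : Eucl d → ℝ} (e : Eucl d)
    (hu : ViscSubsol Ω (fun M P r x => F M P r x t + r / h) f u) :
    ViscSubsol {x | x ∈ Ω ∧ x + e ∈ Ω} (fun M P r x => F M P r (x + e) t + r / h)
      (fun x => f (x + e)) (fun x => u (x + e)) := by
  intro x₀ hx φ hφ hloc
  have hc : Tendsto (fun y => y - e) (𝓝 (x₀ + e)) (𝓝 x₀) := by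
    have : Continuous (fun y : Eucl d => y - e) := by fun_prop
    have := this.tendsto (x₀ + e)
    rwa [add_sub_cancel_right] at this
  have h1 : ContDiffAt ℝ 2 (fun y => φ (y - e)) (x₀ + e) := by
    refine ContDiffAt.comp (x₀ + e) ?_ (contDiffAt_id.sub contDiffAt_const)
    simpa using hφ
  have := hu (x₀ + e) hx.2 (fun y => φ (y - e)) h1 (by
    have := hc.eventually hloc
    filter_upwards [this] with y hy
    simpa using hy)
  rw [gradAt_comp_sub, hessAt_comp_sub, add_sub_cancel_right] at this
  exact this

/-- Translates of a Rothe sequence stay close: boundary values are controlled by the barrier,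
and interior values by comparison. -/
lemma Hyp.translate_le (H : Hyp Ω F lam Lam gam C₀ K σ₁ σ₂) (hh : h ∈ Ioc (0:ℝ) 1)
    (hz : IsRothe Ω F h z) {ψ : Eucl d → ℝ} {T b : ℝ} {e : Eucl d}
    (hψfr : ∀ x ∈ frontier Ω, ψ x = 0)
    (hzψ : ∀ m : ℕ, m * h ≤ T → ∀ x ∈ closure Ω, |z m x| ≤ ψ x) (hb : 0 ≤ b)
    (hψe : ∀ x ∈ closure Ω, x + e ∈ closure Ω → |ψ (x + e) - ψ x| ≤ b) (m : ℕ)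
    (hm : m * h ≤ T) :
    ∀ x ∈ closure Ω, x + e ∈ closure Ω → z m (x + e) - z m x ≤ b + m * h * σ₁ ‖e‖ := by
  have hh0 := hh.1
  have hσ0 : 0 ≤ σ₁ ‖e‖ := H.modulus₁.nonneg (norm_nonneg _)
  set Ω' := {x | x ∈ Ω ∧ x + e ∈ Ω} with hΩ'
  have hcontadd : Continuous (fun x : Eucl d => x + e) := by fun_prop
  have hO' : IsOpen Ω' := H.isOpen.inter (H.isOpen.preimage hcontadd)
  have hcl1 : closure Ω' ⊆ closure Ω := closure_mono fun x hx => hx.1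
  have hcl2 : ∀ x ∈ closure Ω', x + e ∈ closure Ω := fun x hx =>
    map_mem_closure (f := fun x => x + e) hcontadd hx fun y (hy : y ∈ Ω') => hy.2
  have hbdry : ∀ m : ℕ, m * h ≤ T → ∀ x ∈ closure Ω, x + e ∈ closure Ω → x ∉ Ω' →
      z m (x + e) - z m x ≤ b := by
    intro m hm x hx hxe hxn
    have h1 := hψe x hx hxe
    by_cases hxO : x ∈ Ω
    · have hfr : x + e ∈ frontier Ω := by
        rw [frontier, H.isOpen.interior_eq]; exact ⟨hxe, fun h => hxn ⟨hxO, h⟩⟩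
      rw [hz.frontier_eq m hfr]
      rw [hψfr _ hfr] at h1
      have := (abs_le.mp (hzψ m hm x hx)).1
      have := (abs_le.mp h1).1
      linarith
    · have hfr : x ∈ frontier Ω := by
        rw [frontier, H.isOpen.interior_eq]; exact ⟨hx, hxO⟩
      rw [hz.frontier_eq m hfr]
      rw [hψfr _ hfr] at h1
      have := (abs_le.mp (hzψ m hm _ hxe)).2
      have := (abs_le.mp h1).2
      linarith
  induction m with
  | zero =>
    intro x _ _
    rw [hz.1, hz.1]; simpa using hb
  | succ m ih =>
    have hm' : (m : ℝ) * h ≤ T := by push_cast at hm; nlinarith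
    have ih := ih hm'
    have hb' : 0 ≤ b + (m + 1 : ℕ) * h * σ₁ ‖e‖ := by positivity
    have ht : (0:ℝ) ≤ (m + 1) * h := by positivity
    have hcs := H.compStruct (Ω' := Ω') (e := e) (fun x hx => subset_closure hx.1)
      (fun x hx => subset_closure hx.2) ht ht
    rw [sub_self, abs_zero, H.modulus₂.2.2, add_zero] at hcs
    have hA : 0 ≤ Lam * d := by
      have := H.lam_pos.trans_le H.lam_le
      positivity
    have hcz : ∀ k, ContinuousOn (fun x => z k (x + e)) (closure Ω') := fun k =>
      (hz.continuousOn k).comp hcontadd.continuousOn hcl2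
    have key := comparison hO' (H.bounded.subset fun x hx => hx.1) hA H.gam_nonneg hh0 hb'
      H.modulus₁ hcs (hcz (m + 1)) ((hz.continuousOn (m + 1)).mono hcl1)
      (((hz.continuousOn m).mono hcl1).div_const h)
      (fun x hx => by
        have h1 := ih x (subset_closure hx.1) (subset_closure hx.2)
        have h2 : z m (x + e) / h - z m x / h ≤ (b + m * h * σ₁ ‖e‖) / h := by
          rw [← sub_div]; gcongr
        have h3 : (b + (m + 1 : ℕ) * h * σ₁ ‖e‖) / h = (b + m * h * σ₁ ‖e‖) / h + σ₁ ‖e‖ := by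
          push_cast; field_simp; ring
        rw [h3]
        linarith)
      (fun x hx => by
        have hxc := hx.1
        have hxn : x ∉ Ω' := by
          have := hx.2
          rwa [hO'.interior_eq] at this
        have h1 := hbdry (m + 1) hm x (hcl1 hxc) (hcl2 x hxc) hxn
        have h2 : 0 ≤ ((m + 1 : ℕ) : ℝ) * h * σ₁ ‖e‖ := by positivity
        linarith)
      ((hz.2 m).2.1.1.translate e)
      (fun x₀ hx => (hz.2 m).2.1.2 x₀ hx.1)
    intro x hx hxe
    by_cases hxO : x ∈ Ω'
    · exact key x (subset_closure hxO)
    · have h1 := hbdry (m + 1) hm x hx hxe hxO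
      have h2 : 0 ≤ ((m + 1 : ℕ) : ℝ) * h * σ₁ ‖e‖ := by positivity
      linarith

/-- Equicontinuity in space, uniformly in the step and the discrete time. -/
lemma Hyp.equicontinuous (H : Hyp Ω F lam Lam gam C₀ K σ₁ σ₂) (hsm : HasSmoothBoundary Ω)
    {T : ℝ} (hT : 0 < T) {Z : ℝ → ℕ → Eucl d → ℝ} (hZ : ∀ h ∈ Ioc (0:ℝ) 1, IsRothe Ω F h (Z h))
    {η : ℝ} (hη : 0 < η) :
    ∃ δ > 0, ∀ h ∈ Ioc (0:ℝ) 1, ∀ m : ℕ, m * h ≤ T → ∀ x ∈ closure Ω, ∀ y ∈ closure Ω,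
      ‖x - y‖ < δ → |Z h m x - Z h m y| ≤ η := by
  obtain ⟨ψ, hψc, hψ0, hψfr, hψb⟩ := H.exists_barrier_bound hsm hT
  have hzψ : ∀ h ∈ Ioc (0:ℝ) 1, ∀ m : ℕ, m * h ≤ T → ∀ x ∈ closure Ω, |Z h m x| ≤ ψ x := by
    intro h hh m hm x hx
    have h1 := hψb F H h hh (Z h) (hZ h hh) m hm x hx
    have h2 := hψb _ H.neg h hh _ (hZ h hh).neg m hm x hx
    rw [abs_le]
    constructor <;> linarith
  obtain ⟨δ₁, hδ₁, h₁⟩ := Metric.uniformContinuousOn_iff.mp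
    (H.bounded.isCompact_closure.uniformContinuousOn_of_continuous hψc.continuousOn)
    (η / 2) (by positivity)
  obtain ⟨δ₂, hδ₂, h₂⟩ := Metric.continuous_iff.mp H.modulus₁.2.1 0 (η / (2 * T)) (by positivity)
  have key : ∀ h ∈ Ioc (0:ℝ) 1, ∀ m : ℕ, m * h ≤ T → ∀ x ∈ closure Ω, ∀ y ∈ closure Ω,
      ‖y - x‖ < min δ₁ δ₂ → Z h m y - Z h m x ≤ η := by
    intro h hh m hm x hx y hy hxy
    have hxe : x + (y - x) = y := by abel
    have hσ : σ₁ ‖y - x‖ ≤ η / (2 * T) := by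
      have := h₂ ‖y - x‖ (by
        rw [Real.dist_eq, sub_zero, abs_norm]; exact hxy.trans_le (min_le_right _ _))
      rw [H.modulus₁.2.2, Real.dist_eq, sub_zero] at this
      exact (le_abs_self _).trans this.le
    have h3 := H.translate_le (e := y - x) hh (hZ h hh) hψfr (hzψ h hh)
      (b := η / 2) (by positivity) (fun w hw hwe => by
        have := h₁ (w + (y - x)) hwe w hw (by
          rw [dist_eq_norm, add_sub_cancel_left]; exact hxy.trans_le (min_le_left _ _))
        rw [Real.dist_eq] at this
        exact this.le) m hm x hx (by rwa [hxe])
    rw [hxe] at h3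
    have h4 : m * h * σ₁ ‖y - x‖ ≤ T * (η / (2 * T)) := by
      have := H.modulus₁.nonneg (norm_nonneg (y - x))
      gcongr
    have h5 : T * (η / (2 * T)) = η / 2 := by field_simp
    linarith
  refine ⟨min δ₁ δ₂, lt_min hδ₁ hδ₂, fun h hh m hm x hx y hy hxy => ?_⟩
  rw [abs_le]
  have h1 := key h hh m hm x hx y hy (by rwa [norm_sub_rev])
  have h2 := key h hh m hm y hy x hx hxy
  constructor <;> linarith

end Rothe

/-! ### The limit is a viscosity subsolution -/

section Limit

variable {d : ℕ} {Ω : Set (Eucl d)}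
  {F : Matrix (Fin d) (Fin d) ℝ → Eucl d → ℝ → Eucl d → ℝ → ℝ}

/-- A test function that is strictly supersolution near a point stays so after adding a quartic
in space and a square in time, even when its time derivative is taken at a nearby time and the
zeroth-order argument is perturbed. -/
lemma exists_strict_nhd (hO : IsOpen Ω)
    (hF : ContinuousOn
      (fun q : Matrix (Fin d) (Fin d) ℝ × Eucl d × ℝ × Eucl d × ℝ =>
        F q.1 q.2.1 q.2.2.1 q.2.2.2.1 q.2.2.2.2)
      (univ ×ˢ univ ×ˢ univ ×ˢ closure Ω ×ˢ Ici 0))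
    {φ : Eucl d → ℝ → ℝ} (hφ : C21 φ) {x₀ : Eucl d} {t₀ : ℝ} (hx₀ : x₀ ∈ Ω) (ht₀ : 0 < t₀)
    (hpos : 0 < deriv (φ x₀) t₀ + F (hessAt (fun y => φ y t₀) x₀) (gradAt (fun y => φ y t₀) x₀)
      (φ x₀ t₀) x₀ t₀) :
    ∃ r > 0, ∀ x t τ s, ‖x - x₀‖ < r → |t - t₀| < r → |τ - t₀| < r → |s - φ x₀ t₀| < r →
      0 < deriv (φ x) τ + 2 * (τ - t₀) +
        F (hessAt (fun y => φ y t + ‖y - x₀‖ ^ 4) x) (gradAt (fun y => φ y t + ‖y - x₀‖ ^ 4) x)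
          s x t := by
  obtain ⟨h1, h2, h3, h4, h5, h6⟩ := hφ
  set p₀ : Eucl d × ℝ × ℝ × ℝ := (x₀, t₀, t₀, φ x₀ t₀) with hp₀
  have hmem : univ ×ˢ univ ×ˢ univ ×ˢ closure Ω ×ˢ Ici (0:ℝ) ∈
      𝓝 ((hessAt (fun y => φ y t₀) x₀, gradAt (fun y => φ y t₀) x₀, φ x₀ t₀, x₀, t₀) :
        Matrix (Fin d) (Fin d) ℝ × Eucl d × ℝ × Eucl d × ℝ) :=
    prod_mem_nhds univ_mem (prod_mem_nhds univ_mem (prod_mem_nhds univ_mem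
      (prod_mem_nhds (mem_of_superset (hO.mem_nhds hx₀) subset_closure) (Ici_mem_nhds ht₀))))
  have hFc := hF.continuousAt hmem
  have cq := quartic_contDiff x₀
  have cM : Continuous (fun p : Eucl d × ℝ × ℝ × ℝ =>
      hessAt (fun y => φ y p.2.1 + ‖y - x₀‖ ^ 4) p.1) := by
    have : (fun p : Eucl d × ℝ × ℝ × ℝ => hessAt (fun y => φ y p.2.1 + ‖y - x₀‖ ^ 4) p.1)
        = fun p => hessAt (fun y => φ y p.2.1) p.1 + hessAt (fun y => ‖y - x₀‖ ^ 4) p.1 :=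
      funext fun p => hessAt_add (h1 _) cq _
    rw [this]
    exact (h4.comp (by fun_prop : Continuous fun p : Eucl d × ℝ × ℝ × ℝ => (p.1, p.2.1))).add
      ((continuous_hessAt cq).comp continuous_fst)
  have cP : Continuous (fun p : Eucl d × ℝ × ℝ × ℝ =>
      gradAt (fun y => φ y p.2.1 + ‖y - x₀‖ ^ 4) p.1) := by
    have : (fun p : Eucl d × ℝ × ℝ × ℝ => gradAt (fun y => φ y p.2.1 + ‖y - x₀‖ ^ 4) p.1)
        = fun p => gradAt (fun y => φ y p.2.1) p.1 + gradAt (fun y => ‖y - x₀‖ ^ 4) p.1 :=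
      funext fun p => gradAt_add (h1 _) cq _
    rw [this]
    exact (h5.comp (by fun_prop : Continuous fun p : Eucl d × ℝ × ℝ × ℝ => (p.1, p.2.1))).add
      ((continuous_gradAt cq).comp continuous_fst)
  have cD : Continuous (fun p : Eucl d × ℝ × ℝ × ℝ => deriv (φ p.1) p.2.2.1) :=
    h6.comp (by fun_prop : Continuous fun p : Eucl d × ℝ × ℝ × ℝ => (p.1, p.2.2.1))
  have cAll : Continuous (fun p : Eucl d × ℝ × ℝ × ℝ =>
      ((hessAt (fun y => φ y p.2.1 + ‖y - x₀‖ ^ 4) p.1,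
        gradAt (fun y => φ y p.2.1 + ‖y - x₀‖ ^ 4) p.1, p.2.2.2, p.1, p.2.1) :
        Matrix (Fin d) (Fin d) ℝ × Eucl d × ℝ × Eucl d × ℝ)) :=
    cM.prodMk (cP.prodMk (by fun_prop))
  have hval : ((hessAt (fun y => φ y p₀.2.1 + ‖y - x₀‖ ^ 4) p₀.1,
        gradAt (fun y => φ y p₀.2.1 + ‖y - x₀‖ ^ 4) p₀.1, p₀.2.2.2, p₀.1, p₀.2.1) :
        Matrix (Fin d) (Fin d) ℝ × Eucl d × ℝ × Eucl d × ℝ)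
      = (hessAt (fun y => φ y t₀) x₀, gradAt (fun y => φ y t₀) x₀, φ x₀ t₀, x₀, t₀) := by
    simp only [hp₀]
    rw [hessAt_add (h1 _) cq, gradAt_add (h1 _) cq, hessAt_quartic, gradAt_quartic, add_zero,
      add_zero]
  have hGc : ContinuousAt (fun p : Eucl d × ℝ × ℝ × ℝ => deriv (φ p.1) p.2.2.1
      + 2 * (p.2.2.1 - t₀) + F (hessAt (fun y => φ y p.2.1 + ‖y - x₀‖ ^ 4) p.1)
        (gradAt (fun y => φ y p.2.1 + ‖y - x₀‖ ^ 4) p.1) p.2.2.2 p.1 p.2.1) p₀ := by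
    refine ContinuousAt.add (cD.continuousAt.add (by fun_prop)) ?_
    rw [← hval] at hFc
    exact ContinuousAt.comp (f := fun p : Eucl d × ℝ × ℝ × ℝ =>
      ((hessAt (fun y => φ y p.2.1 + ‖y - x₀‖ ^ 4) p.1,
        gradAt (fun y => φ y p.2.1 + ‖y - x₀‖ ^ 4) p.1, p.2.2.2, p.1, p.2.1) :
        Matrix (Fin d) (Fin d) ℝ × Eucl d × ℝ × Eucl d × ℝ)) hFc cAll.continuousAt
  have hev := hGc.eventually (lt_mem_nhds (a := 0) (by
    simp only [Prod.mk.injEq] at hval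
    obtain ⟨e1, e2, e3, e4, e5⟩ := hval
    beta_reduce
    rw [e1, e2, e3]
    simpa [hp₀] using hpos))
  obtain ⟨r, hr, hball⟩ := Metric.eventually_nhds_iff.mp hev
  refine ⟨r, hr, fun x t τ s hx ht hτ hs => ?_⟩
  refine hball (y := (x, t, τ, s)) ?_
  simp only [hp₀, Prod.dist_eq, max_lt_iff, Real.dist_eq, dist_eq_norm (x : Eucl d)]
  exact ⟨hx, ht, hτ, hs⟩

/-- Passage to the limit: at a maximum over a space-time grid of the Rothe values minus the
perturbed test function, comparing with the previous time level bounds the discrete time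
derivative, contradicting the viscosity inequality of that Rothe step. -/
theorem subsol_of_limit {T : ℝ} (hO : IsOpen Ω)
    (hF : ContinuousOn
      (fun q : Matrix (Fin d) (Fin d) ℝ × Eucl d × ℝ × Eucl d × ℝ =>
        F q.1 q.2.1 q.2.2.1 q.2.2.2.1 q.2.2.2.2)
      (univ ×ˢ univ ×ˢ univ ×ˢ closure Ω ×ˢ Ici 0))
    {Z : ℝ → ℕ → Eucl d → ℝ} (hZ : ∀ h ∈ Ioc (0:ℝ) 1, IsRothe Ω F h (Z h))
    {l : Filter ℝ} [l.NeBot] (hl : l ≤ 𝓝[>] 0) {u : Eucl d × ℝ → ℝ}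
    (hu : ∀ η > 0, ∀ᶠ h in l, ∀ x ∈ closure Ω, ∀ t ∈ Icc (0:ℝ) T,
      |Z h ⌊t / h⌋₊ x - u (x, t)| ≤ η) :
    ParabolicViscSubsol Ω T F u := by
  rintro φ hφ ε hε hstr ⟨⟨x₀, t₀⟩, ⟨hx₀, ht₀, ht₀T⟩, hloc, hval⟩
  simp only at hx₀ ht₀ ht₀T hval
  obtain ⟨r, hr, hG⟩ := exists_strict_nhd hO hF hφ hx₀ ht₀
    (hε.trans_le (hstr x₀ (subset_closure hx₀) t₀ ⟨ht₀.le, ht₀T⟩))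
  obtain ⟨h1, h2, h3, -, -, -⟩ := hφ
  -- A cylinder on which all local information is available.
  obtain ⟨r₁, hr₁, hloc₁⟩ := Metric.eventually_nhds_iff.mp
    (eventually_nhdsWithin_iff.mp hloc)
  obtain ⟨r₂, hr₂, hφ₂⟩ := Metric.continuous_iff.mp h3 (x₀, t₀) (r / 2) (by positivity)
  obtain ⟨r₃, hr₃, hball⟩ := Metric.isOpen_iff.mp hO x₀ hx₀
  obtain ⟨ρ, hρ, hρ1, hρr, hρ₁, hρ₂, hρ₃, hρt⟩ : ∃ ρ > 0, ρ ≤ 1 ∧ ρ < r / 2 ∧ ρ < r₁ ∧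
      ρ < r₂ ∧ ρ < r₃ ∧ ρ < t₀ := by
    have := exists_between (a₁ := (0:ℝ))
      (a₂ := min 1 (min (r / 2) (min r₁ (min r₂ (min r₃ t₀))))) (by positivity)
    obtain ⟨ρ, hρ, hlt⟩ := this
    simp only [lt_min_iff] at hlt
    exact ⟨ρ, hρ, hlt.1.le, hlt.2.1, hlt.2.2.1, hlt.2.2.2.1, hlt.2.2.2.2.1, hlt.2.2.2.2.2⟩
  -- `η` is smaller than the drop of the perturbation at half the radius.
  set η := min ((ρ / 2) ^ 4 / 8) (r / 16) with hη
  have hη0 : 0 < η := by positivity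
  have hη1 : η ≤ (ρ / 2) ^ 4 / 8 := min_le_left _ _
  have hη2 : η ≤ r / 16 := min_le_right _ _
  obtain ⟨r₄, hr₄, hφ₄⟩ := Metric.continuous_iff.mp h3 (x₀, t₀) η hη0
  have hev0 : ∀ᶠ h in l, h ∈ Ioo (0:ℝ) (min (ρ / 2) (min r₄ η)) :=
    hl (Ioo_mem_nhdsGT (by positivity))
  obtain ⟨h, ⟨hh0, hhlt⟩, hconv⟩ := (hev0.and (hu η hη0)).exists
  simp only [lt_min_iff] at hhlt
  obtain ⟨hhρ, hhr₄, hhη⟩ := hhlt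
  have hh1 : h ∈ Ioc (0:ℝ) 1 := ⟨hh0, by linarith⟩
  have hz := hZ h hh1
  have hfl : ∀ m : ℕ, ⌊(m * h) / h⌋₊ = m := fun m => by
    rw [mul_div_cancel_right₀ _ hh0.ne', Nat.floor_natCast]
  -- The discrete time levels in `[t₀ - ρ, t₀]`.
  set m₀ := ⌊t₀ / h⌋₊ with hm₀
  have hm₀1 : m₀ * h ≤ t₀ := by
    have := Nat.floor_le (a := t₀ / h) (by positivity)
    rwa [le_div_iff₀ hh0] at this
  have hm₀2 : t₀ < (m₀ + 1) * h := by
    have := Nat.lt_floor_add_one (t₀ / h)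
    rwa [div_lt_iff₀ hh0] at this
  set J := (Finset.range (m₀ + 1)).filter (fun m : ℕ => t₀ - ρ ≤ m * h) with hJ
  have hJm : ∀ m : ℕ, m ∈ J ↔ m * h ≤ t₀ ∧ t₀ - ρ ≤ m * h := by
    intro m
    rw [hJ, Finset.mem_filter, Finset.mem_range, Nat.lt_succ_iff, hm₀,
      Nat.le_floor_iff (by positivity), le_div_iff₀ hh0]
  have hm₀J : m₀ ∈ J := (hJm m₀).mpr ⟨hm₀1, by linarith⟩
  set Φ : ℕ → Eucl d → ℝ := fun m x => Z h m x - φ x (m * h) - ‖x - x₀‖ ^ 4 - (m * h - t₀) ^ 2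
    with hΦ
  have hsubO : closedBall x₀ ρ ⊆ Ω := (closedBall_subset_ball hρ₃).trans hball
  have hΦc : ∀ m, ContinuousOn (Φ m) (closedBall x₀ ρ) := by
    intro m
    refine ((((hz.continuousOn m).mono (hsubO.trans subset_closure)).sub
      (h1 _).continuous.continuousOn).sub (quartic_contDiff x₀).continuous.continuousOn).sub
      continuousOn_const
  have hmaxm : ∀ m, ∃ x ∈ closedBall x₀ ρ, IsMaxOn (Φ m) (closedBall x₀ ρ) x := fun m =>
    (isCompact_closedBall x₀ ρ).exists_isMaxOn (nonempty_closedBall.mpr hρ.le) (hΦc m)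
  choose X hXmem hXmax using hmaxm
  obtain ⟨m, hmJ, hmmax⟩ := J.exists_max_image (fun m => Φ m (X m)) ⟨m₀, hm₀J⟩
  obtain ⟨hmt, hmt'⟩ := (hJm m).mp hmJ
  have hmax : ∀ k ∈ J, ∀ x ∈ closedBall x₀ ρ, Φ k x ≤ Φ m (X m) := fun k hk x hx =>
    (hXmax k hx).trans (hmmax k hk)
  set x := X m with hx
  have hxb : ‖x - x₀‖ ≤ ρ := by
    have := hXmem m
    rwa [mem_closedBall, dist_eq_norm] at this
  have hxO : x ∈ Ω := hsubO (hXmem m)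
  have habst : |m * h - t₀| ≤ ρ := by rw [abs_le]; constructor <;> linarith
  have hmh0 : 0 < m * h := by linarith
  -- Lower bound for the maximum, from the grid point next to `(x₀, t₀)`.
  have hlow : -(3 * η) ≤ Φ m x := by
    refine le_trans ?_ (hmax m₀ hm₀J x₀ (mem_closedBall_self hρ.le))
    have e1 := (abs_le.mp (hconv x₀ (subset_closure hx₀) t₀ ⟨ht₀.le, ht₀T⟩)).1
    have e2 := hφ₄ (x₀, m₀ * h) (by
      rw [Prod.dist_eq, dist_self, max_lt_iff, Real.dist_eq, abs_lt]
      exact ⟨hr₄, by linarith, by linarith⟩)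
    rw [Real.dist_eq, abs_lt] at e2
    have e3 : (m₀ * h - t₀) ^ 2 ≤ η := by
      have : |m₀ * h - t₀| ≤ h := by rw [abs_le]; constructor <;> linarith
      have := sq_le_sq' (abs_le.mp this).1 (abs_le.mp this).2
      have : h ^ 2 ≤ h := by nlinarith [hh1.2]
      linarith
    simp only [hΦ, sub_self, norm_zero]
    linarith
  -- Upper bound, from the local maximum of `u - φ`.
  have hup : Z h m x - φ x (m * h) ≤ η := by
    have e1 := (abs_le.mp (hconv x (subset_closure hxO) (m * h) ⟨hmh0.le, by linarith⟩)).2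
    rw [hfl] at e1
    have e2 := hloc₁ (y := (x, m * h)) (by
      rw [Prod.dist_eq, max_lt_iff, dist_eq_norm, Real.dist_eq]
      exact ⟨by linarith, by linarith⟩) ⟨hxO, hmh0, by linarith⟩
    simp only at e2
    linarith
  have hsmall : ‖x - x₀‖ ^ 4 + (m * h - t₀) ^ 2 ≤ 4 * η := by
    have : Φ m x = Z h m x - φ x (m * h) - ‖x - x₀‖ ^ 4 - (m * h - t₀) ^ 2 := rfl
    linarith
  have hxs : ‖x - x₀‖ < ρ / 2 := by
    refine lt_of_pow_lt_pow_left₀ 4 (by positivity) ?_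
    have : 0 < (ρ / 2) ^ 4 := by positivity
    linarith [sq_nonneg (m * h - t₀)]
  have hts : |m * h - t₀| < ρ / 2 := by
    refine abs_lt_of_sq_lt_sq ?_ (by positivity)
    have e1 : 0 < (ρ / 2) ^ 4 := by positivity
    have e2 : (ρ / 2) ^ 4 ≤ (ρ / 2) ^ 2 := pow_le_pow_of_le_one (by positivity) (by linarith)
      (by norm_num)
    have : 0 ≤ ‖x - x₀‖ ^ 4 := by positivity
    linarith
  rw [abs_lt] at hts
  have hm0 : m ≠ 0 := by
    rintro rfl
    simp at hmh0
  obtain ⟨k, rfl⟩ := Nat.exists_eq_succ_of_ne_zero hm0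
  simp only [Nat.succ_eq_add_one] at *
  have hkc : ((k + 1 : ℕ) : ℝ) * h = k * h + h := by push_cast; ring
  have hkJ : k ∈ J := (hJm k).mpr ⟨by linarith, by linarith⟩
  have hprev := hmax k hkJ x (hXmem _)
  -- Discrete time derivative by the mean value theorem.
  obtain ⟨τ, ⟨hτ1, hτ2⟩, hτ⟩ := exists_deriv_eq_slope (fun t => φ x t + (t - t₀) ^ 2)
    (a := k * h) (b := (k + 1 : ℕ) * h) (by linarith)
    ((h2 x).continuous.add (by fun_prop)).continuousOn
    (((h2 x).differentiable (by norm_num)).add (by fun_prop)).differentiableOn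
  have hder : deriv (fun t => φ x t + (t - t₀) ^ 2) τ = deriv (φ x) τ + 2 * (τ - t₀) := by
    have e1 := ((h2 x).differentiable (by norm_num) τ).hasDerivAt
    have e2 := ((hasDerivAt_id τ).sub_const t₀).pow 2
    have e3 := (e1.add e2).deriv
    simp only [id, Nat.cast_ofNat, mul_one, Nat.add_one_sub_one, pow_one] at e3
    exact e3
  have hslope : deriv (φ x) τ + 2 * (τ - t₀) ≤ (Z h (k + 1) x - Z h k x) / h := by
    rw [← hder, hτ, hkc, add_sub_cancel_left]
    refine div_le_div_of_nonneg_right ?_ hh0.le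
    simp only [hΦ] at hprev
    rw [hkc] at hprev
    linarith
  -- The viscosity inequality of the step reaching level `k + 1`.
  have hvis := (hz.2 k).2.1.1 x hxO (fun y => φ y ((k + 1 : ℕ) * h) + ‖y - x₀‖ ^ 4)
    ((h1 _).add (quartic_contDiff x₀)).contDiffAt (by
      have hnb : closedBall x₀ ρ ∈ 𝓝 x := by
        refine mem_of_superset (isOpen_ball.mem_nhds (x := x) ?_) ball_subset_closedBall
        rw [mem_ball, dist_eq_norm]; linarith
      filter_upwards [hnb] with y hy
      have := hXmax (k + 1) hy
      simp only [hΦ, mem_ofPred_eq, ← hx] at this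
      linarith)
  have hfin := hG x ((k + 1 : ℕ) * h) τ (Z h (k + 1) x) (by linarith)
    (by rw [abs_lt]; constructor <;> linarith) (by rw [abs_lt]; constructor <;> linarith) (by
      have e1 := hφ₂ (x, (k + 1 : ℕ) * h) (by
        rw [Prod.dist_eq, max_lt_iff, dist_eq_norm, Real.dist_eq]
        exact ⟨by linarith, by linarith⟩)
      rw [Real.dist_eq, abs_lt] at e1
      have e2 : 0 ≤ ‖x - x₀‖ ^ 4 := by positivity
      have e3 : Φ (k + 1) x = Z h (k + 1) x - φ x ((k + 1 : ℕ) * h) - ‖x - x₀‖ ^ 4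
        - ((k + 1 : ℕ) * h - t₀) ^ 2 := rfl
      rw [abs_lt]
      constructor <;> linarith [sq_nonneg ((k + 1 : ℕ) * h - t₀)])
  push_cast at hvis hfin
  rw [sub_div] at hslope
  linarith

end Limit

/-! ### Compactness and conclusion -/

section Conclusion

variable {d : ℕ} {Ω : Set (Eucl d)}
  {F : Matrix (Fin d) (Fin d) ℝ → Eucl d → ℝ → Eucl d → ℝ → ℝ}
  {lam Lam gam C₀ K : ℝ} {σ₁ σ₂ : ℝ → ℝ}

lemma floor_mul_le {t T h : ℝ} (ht : t ∈ Icc (0:ℝ) T) (hh : 0 < h) :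
    (⌊t / h⌋₊ : ℝ) * h ≤ t := by
  have := Nat.floor_le (div_nonneg ht.1 hh.le)
  rwa [le_div_iff₀ hh] at this

lemma Hyp.floor_lipschitz (H : Hyp Ω F lam Lam gam C₀ K σ₁ σ₂) {h : ℝ} {z : ℕ → Eucl d → ℝ}
    (hh : h ∈ Ioc (0:ℝ) 1) (hz : IsRothe Ω F h z) {T : ℝ} (hT : 0 < T) {x : Eucl d}
    (hx : x ∈ closure Ω) {t s : ℝ} (ht : t ∈ Icc (0:ℝ) T) (hs : s ∈ Icc (0:ℝ) T) :
    |z ⌊t / h⌋₊ x - z ⌊s / h⌋₊ x| ≤ (K + C₀ * T) * (|t - s| + h) := by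
  have hC : 0 ≤ K + C₀ * T := add_nonneg H.K_nonneg (mul_nonneg H.C_nonneg hT.le)
  wlog hst : s ≤ t generalizing s t
  · rw [abs_sub_comm, abs_sub_comm t s]
    exact this hs ht (le_of_not_ge hst)
  obtain ⟨k, hk⟩ := Nat.exists_eq_add_of_le
    (Nat.floor_le_floor (div_le_div_of_nonneg_right hst hh.1.le))
  have h1 := floor_mul_le ht hh.1
  have h2 := Nat.lt_floor_add_one (s / h)
  rw [div_lt_iff₀ hh.1] at h2
  rw [hk] at h1 ⊢
  refine (H.time_lipschitz hh hz hx _ k (h1.trans ht.2)).trans ?_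
  refine mul_le_mul_of_nonneg_left ?_ hC
  rw [abs_of_nonneg (by linarith)]
  push_cast at h1
  linarith

/-- Along an ultrafilter of steps tending to zero, the bounded Rothe values converge pointwise. -/
lemma Hyp.exists_limit (H : Hyp Ω F lam Lam gam C₀ K σ₁ σ₂) {T : ℝ} (hT : 0 < T)
    {Z : ℝ → ℕ → Eucl d → ℝ} (hZ : ∀ h ∈ Ioc (0:ℝ) 1, IsRothe Ω F h (Z h))
    (l : Ultrafilter ℝ) (hl : ∀ᶠ h in (l : Filter ℝ), h ∈ Ioc (0:ℝ) 1) :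
    ∃ u : Eucl d × ℝ → ℝ, ∀ x ∈ closure Ω, ∀ t ∈ Icc (0:ℝ) T,
      Tendsto (fun h => Z h ⌊t / h⌋₊ x) l (𝓝 (u (x, t))) := by
  have key : ∀ p : Eucl d × ℝ, ∃ a : ℝ, p.1 ∈ closure Ω → p.2 ∈ Icc (0:ℝ) T →
      Tendsto (fun h => Z h ⌊p.2 / h⌋₊ p.1) l (𝓝 a) := by
    rintro ⟨x, t⟩
    by_cases hx : x ∈ closure Ω ∧ t ∈ Icc (0:ℝ) T
    · set B := (K + C₀ * T) * (T + 1)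
      have hC : 0 ≤ K + C₀ * T := add_nonneg H.K_nonneg (mul_nonneg H.C_nonneg hT.le)
      have hb : ∀ᶠ h in (l : Filter ℝ), Z h ⌊t / h⌋₊ x ∈ Icc (-B) B := by
        filter_upwards [hl] with h hh
        have h1 := H.floor_lipschitz hh (hZ h hh) hT hx.1 hx.2 (left_mem_Icc.2 hT.le)
        rw [zero_div, Nat.floor_zero, (hZ h hh).1 x, sub_zero, sub_zero,
          abs_of_nonneg hx.2.1] at h1
        rw [mem_Icc, ← abs_le]
        exact h1.trans (mul_le_mul_of_nonneg_left (add_le_add hx.2.2 hh.2) hC)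
      obtain ⟨a, -, ha⟩ := (isCompact_Icc (a := -B) (b := B)).ultrafilter_le_nhds
        (l.map fun h => Z h ⌊t / h⌋₊ x) (le_principal_iff.2 hb)
      exact ⟨a, fun _ _ => ha⟩
    · exact ⟨0, fun h1 h2 => absurd ⟨h1, h2⟩ hx⟩
  choose u hu using key
  exact ⟨u, fun x hx t ht => hu (x, t) hx ht⟩

lemma C21.neg {φ : Eucl d → ℝ → ℝ} (hφ : C21 φ) : C21 fun x t => -φ x t := by
  obtain ⟨h1, h2, h3, h4, h5, h6⟩ := hφ
  refine ⟨fun t => (h1 t).neg, fun x => (h2 x).neg, h3.neg, ?_, ?_, ?_⟩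
  · simp only [hessAt_neg]
    exact h4.neg
  · simp only [gradAt_neg]
    exact h5.neg
  · have : ∀ p : Eucl d × ℝ, deriv (fun t => -φ p.1 t) p.2 = -deriv (φ p.1) p.2 :=
      fun p => deriv.fun_neg
    simp only [this]
    exact h6.neg

/-- The supersolution property of `u` is the subsolution property of `-u` for `negOp F`. -/
lemma supersol_of_neg {T : ℝ} {u : Eucl d × ℝ → ℝ}
    (h : ParabolicViscSubsol Ω T (negOp F) fun p => -u p) : ParabolicViscSupersol Ω T F u := by
  rintro φ hφ ε hε hstr ⟨p, hp, hmin, hval⟩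
  refine h (fun x t => -φ x t) hφ.neg ε hε (fun x hx t ht => ?_) ⟨p, hp, ?_, by linarith⟩
  · have h1 := hstr x hx t ht
    have h2 : deriv (fun t => -φ x t) t = -deriv (φ x) t := deriv.fun_neg
    simp only [negOp, hessAt_neg, gradAt_neg, neg_neg]
    rw [h2]
    linarith
  · exact hmin.neg.congr (Eventually.of_forall fun q => by ring) hp

theorem Hyp.exists_solution (H : Hyp Ω F lam Lam gam C₀ K σ₁ σ₂) (hsm : HasSmoothBoundary Ω)
    {T : ℝ} (hT : 0 < T) {Z : ℝ → ℕ → Eucl d → ℝ}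
    (hZ : ∀ h ∈ Ioc (0:ℝ) 1, IsRothe Ω F h (Z h)) :
    ∃ u : Eucl d × ℝ → ℝ,
      ContinuousOn u (closure Ω ×ˢ Icc 0 T) ∧
      ParabolicViscSubsol Ω T F u ∧ ParabolicViscSupersol Ω T F u ∧
      (∀ x ∈ frontier Ω, ∀ t ∈ Icc (0:ℝ) T, u (x, t) = 0) ∧
      (∀ x ∈ closure Ω, u (x, 0) = 0) ∧
      ∃ C : ℝ, ∀ x ∈ closure Ω, ∀ t ∈ Icc (0:ℝ) T, ∀ s ∈ Icc (0:ℝ) T,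
        |u (x, t) - u (x, s)| ≤ C * |t - s| := by
  set U : Ultrafilter ℝ := Ultrafilter.of (𝓝[>] (0:ℝ)) with hU
  set l : Filter ℝ := (U : Filter ℝ) with hl
  have hle : l ≤ 𝓝[>] (0:ℝ) := Ultrafilter.of_le _
  have hl1 : ∀ᶠ h in l, h ∈ Ioc (0:ℝ) 1 := hle (Ioc_mem_nhdsGT one_pos)
  have hl0 : Tendsto (fun h : ℝ => h) l (𝓝 0) := hle.trans nhdsWithin_le_nhds
  obtain ⟨u, hu⟩ := H.exists_limit hT hZ U hl1
  set C := K + C₀ * T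
  have hC : 0 ≤ C := add_nonneg H.K_nonneg (mul_nonneg H.C_nonneg hT.le)
  have hlip : ∀ x ∈ closure Ω, ∀ t ∈ Icc (0:ℝ) T, ∀ s ∈ Icc (0:ℝ) T,
      |u (x, t) - u (x, s)| ≤ C * |t - s| := by
    intro x hx t ht s hs
    have hlim : Tendsto (fun h => C * (|t - s| + h)) l (𝓝 (C * (|t - s| + 0))) :=
      (tendsto_const_nhds.add hl0).const_mul C
    rw [add_zero] at hlim
    refine le_of_tendsto_of_tendsto ((hu x hx t ht).sub (hu x hx s hs)).abs hlim ?_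
    filter_upwards [hl1] with h hh
    exact H.floor_lipschitz hh (hZ h hh) hT hx ht hs
  have heq : ∀ η > 0, ∃ δ > 0, ∀ x ∈ closure Ω, ∀ y ∈ closure Ω, ‖x - y‖ < δ →
      ∀ t ∈ Icc (0:ℝ) T, (∀ h ∈ Ioc (0:ℝ) 1, |Z h ⌊t / h⌋₊ x - Z h ⌊t / h⌋₊ y| ≤ η) ∧
        |u (x, t) - u (y, t)| ≤ η := by
    intro η hη
    obtain ⟨δ, hδ, h⟩ := H.equicontinuous hsm hT hZ hη
    refine ⟨δ, hδ, fun x hx y hy hxy t ht => ?_⟩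
    have h1 : ∀ h ∈ Ioc (0:ℝ) 1, |Z h ⌊t / h⌋₊ x - Z h ⌊t / h⌋₊ y| ≤ η := fun k hk =>
      h k hk _ ((floor_mul_le ht hk.1).trans ht.2) x hx y hy hxy
    refine ⟨h1, le_of_tendsto ((hu x hx t ht).sub (hu y hy t ht)).abs ?_⟩
    filter_upwards [hl1] with k hk using h1 k hk
  -- Joint modulus of continuity, shared by the limit and the approximations.
  have hjoint : ∀ η > 0, ∃ δ > 0, ∀ p ∈ closure Ω ×ˢ Icc (0:ℝ) T, ∀ q ∈ closure Ω ×ˢ Icc (0:ℝ) T,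
      dist q p < δ → (∀ h ∈ Ioc (0:ℝ) 1,
        |Z h ⌊q.2 / h⌋₊ q.1 - Z h ⌊p.2 / h⌋₊ p.1| ≤ η + C * h) ∧ |u q - u p| ≤ η := by
    intro η hη
    obtain ⟨δ, hδ, h⟩ := heq (η / 2) (by positivity)
    refine ⟨min δ (η / (2 * (C + 1))), by positivity, ?_⟩
    rintro ⟨x, t⟩ ⟨hx, ht⟩ ⟨y, s⟩ ⟨hy, hs⟩ hd
    simp only at hx ht hy hs
    rw [Prod.dist_eq, max_lt_iff, dist_eq_norm, Real.dist_eq, lt_min_iff, lt_min_iff] at hd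
    have hts : C * |s - t| ≤ η / 2 := by
      have h1 := hd.2.2
      rw [lt_div_iff₀ (by positivity)] at h1
      simp only at h1
      nlinarith [abs_nonneg (s - t)]
    have h1 := h y hy x hx hd.1.1 s hs
    refine ⟨fun k hk => ?_, ?_⟩
    · have h2 := H.floor_lipschitz hk (hZ k hk) hT hx hs ht
      have h3 := h1.1 k hk
      have h4 := abs_sub_le (Z k ⌊s / k⌋₊ y) (Z k ⌊s / k⌋₊ x) (Z k ⌊t / k⌋₊ x)
      have h5 : (K + C₀ * T) * (|s - t| + k) = C * |s - t| + C * k := by ring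
      linarith
    · have h2 := hlip x hx s hs t ht
      have h4 := abs_sub_le (u (y, s)) (u (x, s)) (u (x, t))
      linarith [h1.2]
  have hcont : ContinuousOn u (closure Ω ×ˢ Icc 0 T) := by
    refine Metric.continuousOn_iff.2 fun p hp ε hε => ?_
    obtain ⟨δ, hδ, h⟩ := hjoint (ε / 2) (by positivity)
    refine ⟨δ, hδ, fun q hq hqp => ?_⟩
    rw [Real.dist_eq]
    linarith [(h p hp q hq hqp).2]
  have hunif : ∀ η > 0, ∀ᶠ h in l, ∀ x ∈ closure Ω, ∀ t ∈ Icc (0:ℝ) T,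
      |Z h ⌊t / h⌋₊ x - u (x, t)| ≤ η := by
    intro η hη
    have hcomp : IsCompact (closure Ω ×ˢ Icc (0:ℝ) T) :=
      H.bounded.isCompact_closure.prod isCompact_Icc
    suffices ∀ᶠ h in l, ∀ p ∈ closure Ω ×ˢ Icc (0:ℝ) T,
        |Z h ⌊p.2 / h⌋₊ p.1 - u p| ≤ η from
      this.mono fun h hh x hx t ht => hh (x, t) ⟨hx, ht⟩
    obtain ⟨δ, hδ, hj⟩ := hjoint (η / 4) (by positivity)
    refine hcomp.induction_on (p := fun S => ∀ᶠ h in l, ∀ p ∈ S,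
        |Z h ⌊p.2 / h⌋₊ p.1 - u p| ≤ η) (by simp) (fun S S' hSS h => ?_) (fun S S' h h' => ?_)
      (fun p hp => ?_)
    · exact h.mono fun k hk p hp => hk p (hSS hp)
    · filter_upwards [h, h'] with k hk hk' p hp
      exact hp.elim (hk p) (hk' p)
    · refine ⟨(closure Ω ×ˢ Icc (0:ℝ) T) ∩ ball p δ,
        inter_mem self_mem_nhdsWithin (mem_nhdsWithin_of_mem_nhds (ball_mem_nhds p hδ)), ?_⟩
      have hsmall : ∀ᶠ h in l, C * h < η / 4 := by
        have := hl0.const_mul C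
        rw [mul_zero] at this
        exact this.eventually_lt_const (by positivity)
      have hpt : ∀ᶠ h in l, |Z h ⌊p.2 / h⌋₊ p.1 - u p| < η / 4 := by
        have := ((hu p.1 hp.1 p.2 hp.2).sub_const (u p)).abs
        rw [Prod.mk.eta, sub_self, abs_zero] at this
        exact this.eventually_lt_const (by positivity)
      filter_upwards [hsmall, hpt, hl1] with h h1 h2 hh q hq
      obtain ⟨h3, h4⟩ := hj p hp q hq.1 hq.2
      have h5 := h3 h hh
      have h6 := abs_sub_le (Z h ⌊q.2 / h⌋₊ q.1) (Z h ⌊p.2 / h⌋₊ p.1) (u q)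
      have h7 := abs_sub_le (Z h ⌊p.2 / h⌋₊ p.1) (u p) (u q)
      rw [abs_sub_comm (u p)] at h7
      linarith
  refine ⟨u, hcont, subsol_of_limit H.isOpen H.cont hZ hle hunif,
    supersol_of_neg (subsol_of_limit (Z := fun h m x => -Z h m x) H.neg.isOpen H.neg.cont
      (fun h hh => (hZ h hh).neg) hle fun η hη => ?_), ?_, ?_, C, hlip⟩
  · filter_upwards [hunif η hη] with h hh x hx t ht
    rw [neg_sub_neg, abs_sub_comm]
    exact hh x hx t ht
  · intro x hx t ht
    refine tendsto_nhds_unique (hu x (frontier_subset_closure hx) t ht)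
      (tendsto_const_nhds.congr' ?_)
    filter_upwards [hl1] with h hh using ((hZ h hh).frontier_eq _ hx).symm
  · intro x hx
    refine tendsto_nhds_unique (hu x hx 0 (left_mem_Icc.2 hT.le))
      (tendsto_const_nhds.congr' ?_)
    filter_upwards [hl1] with h hh
    rw [zero_div, Nat.floor_zero, (hZ h hh).1]

end Conclusion

/-- **Lipschitz regularity in time.**  Under the standing hypotheses there is a continuous
function `u` on `closure Ω × [0,T]` which is a viscosity solution of
`u_t + F(D²u, Du, u, x, t) = 0` in `Ω × (0,T]`, vanishes on the parabolic boundary, and is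
Lipschitz in time. -/
theorem exists_solution_lipschitz_in_time (d : ℕ) (T lam Lam gam C₀ K : ℝ)
    (hT : 0 < T) (hlam : 0 < lam) (hlL : lam ≤ Lam) (hgam : 0 ≤ gam)
    (hC₀ : 0 ≤ C₀) (hK : 0 ≤ K)
    (Ω : Set (Eucl d)) (hΩopen : IsOpen Ω) (hΩbdd : Bornology.IsBounded Ω)
    (hΩsm : HasSmoothBoundary Ω)
    (F : Matrix (Fin d) (Fin d) ℝ → Eucl d → ℝ → Eucl d → ℝ → ℝ)
    (ω : ℝ → ℝ → ℝ) (σ₁ σ₂ : ℝ → ℝ)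
    (hFcont : ContinuousOn
      (fun q : Matrix (Fin d) (Fin d) ℝ × Eucl d × ℝ × Eucl d × ℝ =>
        F q.1 q.2.1 q.2.2.1 q.2.2.2.1 q.2.2.2.2)
      (univ ×ˢ univ ×ˢ univ ×ˢ closure Ω ×ˢ Ici 0))
    (hUE : UniformlyElliptic lam Lam (closure Ω) (Ici 0) F)
    (hStruct : StructureCondition lam Lam gam ω (closure Ω) (Ici 0) F)
    (hσ₁ : IsModulus σ₁) (hσ₂ : IsModulus σ₂)
    (hjoint : ∀ (M : Matrix (Fin d) (Fin d) ℝ) (P : Eucl d) (r : ℝ),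
      ∀ x ∈ closure Ω, ∀ y ∈ closure Ω, ∀ t ∈ Ici (0:ℝ), ∀ s ∈ Ici (0:ℝ),
        |F M P r x t - F M P r y s| ≤ σ₁ ‖x - y‖ + σ₂ |t - s|)
    (hσ₂lin : ∀ h ∈ Ioc (0:ℝ) 1, σ₂ h ≤ C₀ * h)
    (hFK : ∀ x ∈ closure Ω, ∀ t ∈ Ici (0:ℝ), |F 0 0 0 x t| ≤ K)
    (Z : ℝ → ℕ → Eucl d → ℝ)
    (hZ : ∀ h ∈ Ioc (0:ℝ) 1, (∀ x, Z h 0 x = 0) ∧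
      ∀ m : ℕ, RotheStep Ω F h m (Z h m) (Z h (m + 1))) :
    ∃ u : Eucl d × ℝ → ℝ,
      ContinuousOn u (closure Ω ×ˢ Icc 0 T) ∧
      ParabolicViscSubsol Ω T F u ∧ ParabolicViscSupersol Ω T F u ∧
      (∀ x ∈ frontier Ω, ∀ t ∈ Icc (0:ℝ) T, u (x, t) = 0) ∧
      (∀ x ∈ closure Ω, u (x, 0) = 0) ∧
      ∃ C : ℝ, ∀ x ∈ closure Ω, ∀ t ∈ Icc (0:ℝ) T, ∀ s ∈ Icc (0:ℝ) T,
        |u (x, t) - u (x, s)| ≤ C * |t - s| := by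
  have H := Hyp.of_structure hlam hlL hgam hC₀ hK hΩopen hΩbdd hFcont hStruct hσ₁ hσ₂ hjoint hσ₂lin
    hFK
  exact H.exists_solution hΩsm hT hZ

end
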